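/- arXiv:1610.08671 — 4 statements merged into one kernel-verified Lean document; each statement's English description precedes it below -/
import Mathlib

section
/- Let a₁, a₂, a₃, a₄ ∈ 𝔽[t] be squarefree nonzero polynomials and let f ∈ 𝔽[t] be a monic irreducible polynomial dividing exactly two of the coefficients, say aᵢ and aⱼ, and not dividing the other two coefficients a_k and a_l (where {i,j,k,l} = {1,2,3,4}). Then the equation a₁x₁² + a₂x₂² + a₃x₃² + a₄x₄² = 0 has a nontrivial solution in the f-adic completion 𝔽_q(t)_(f) if and only if at least one of the following holds: (1) −a_k a_l is a square modulo f; (2) −(aᵢ/f)(aⱼ/f) is a square modulo f. -/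
open Polynomial IsDedekindDomain

set_option synthInstance.maxHeartbeats 1000000

/-- The height-one prime of `F[X]` generated by an irreducible polynomial `f`. -/
noncomputable def primeOfIrreducible {F : Type*} [Field F] {f : F[X]}
    (hf : Irreducible f) : HeightOneSpectrum F[X] where
  asIdeal := Ideal.span {f}
  isPrime := (Ideal.span_singleton_prime hf.ne_zero).mpr hf.prime
  ne_bot := by simpa [Ideal.span_singleton_eq_bot] using hf.ne_zero

/-!
Springer's theorem: over a Henselian discrete valuation ring in which `2` is a unit, a diagonal
form `ϖb ⟂ d` with `b`, `d` unit-valued is anisotropic over the fraction field if and only if the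
reductions of `b` and of `d` are anisotropic over the residue field. A primitive zero of `ϖb ⟂ d`
reduces to a zero of `d`; if that vanishes, the `d`-coordinates are divisible by `ϖ`, and dividing
the equation by `ϖ` gives a nontrivial zero of `b` modulo `ϖ`. Conversely, a residual zero lifts by
Hensel's lemma applied to one nonzero coordinate. Here both blocks are binary, and a binary form
`⟨a, b⟩` over a field is anisotropic exactly when `-ab` is not a square.
-/

open IsLocalRing
open QuadraticMap (weightedSumSquares weightedSumSquares_apply not_anisotropic_iff_exists)

section DiagonalForms

variable {ι κ R S : Type*} [Fintype ι] [Fintype κ]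

theorem algebraMap_weightedSumSquares [CommRing R] [CommRing S] [Algebra R S]
    (c x : ι → R) :
    algebraMap R S (weightedSumSquares R c x) =
      weightedSumSquares S c (fun i => algebraMap R S (x i)) := by
  simp only [weightedSumSquares_apply, smul_eq_mul, map_sum, map_mul, Algebra.smul_def]

theorem weightedSumSquares_algebraMap_comp {A : Type*} [CommRing R] [CommRing A] [CommRing S]
    [Algebra R A] [Algebra A S] [Algebra R S] [IsScalarTower R A S] (c : ι → R) :
    weightedSumSquares S (algebraMap R A ∘ c) = weightedSumSquares S c := by
  ext x
  simp only [weightedSumSquares_apply, Function.comp_apply, algebraMap_smul]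

theorem weightedSumSquares_sumElim [CommRing R] [CommRing S] [Algebra R S]
    (c : ι → R) (d : κ → R) (x : ι ⊕ κ → S) :
    weightedSumSquares S (Sum.elim c d) x =
      weightedSumSquares S c (x ∘ Sum.inl) + weightedSumSquares S d (x ∘ Sum.inr) := by
  simp only [weightedSumSquares_apply, Fintype.sum_sum_type, Sum.elim_inl, Sum.elim_inr,
    Function.comp_apply]

theorem weightedSumSquares_update [CommRing R] [CommRing S] [Algebra R S] [DecidableEq ι]
    (c : ι → R) (x : ι → S) (m : ι) (t : S) :
    weightedSumSquares S c (Function.update x m t) =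
      weightedSumSquares S c x + c m • (t * t - x m * x m) := by
  have hrest : ∀ i ∈ Finset.univ.erase m,
      c i • (Function.update x m t i * Function.update x m t i) = c i • (x i * x i) :=
    fun i hi => by rw [Function.update_of_ne (Finset.ne_of_mem_erase hi)]
  rw [weightedSumSquares_apply, weightedSumSquares_apply,
    ← Finset.add_sum_erase _ _ (Finset.mem_univ m), Finset.sum_congr rfl hrest,
    ← Finset.add_sum_erase _ (fun i => c i • (x i * x i)) (Finset.mem_univ m),
    Function.update_self, smul_sub]
  abel

theorem anisotropic_weightedSumSquares_comp [CommRing R] [CommRing S] [Algebra R S]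
    {c : κ → R} {e : ι → κ} (he : Function.Injective e)
    (hc : (weightedSumSquares S c).Anisotropic) :
    (weightedSumSquares S (c ∘ e)).Anisotropic := by
  intro x hx
  have hext : Function.extend e x 0 = 0 := by
    refine hc _ (.trans ?_ hx)
    simp only [weightedSumSquares_apply]
    refine (Fintype.sum_of_injective e he _ _ (fun m hm => ?_) fun i => ?_).symm
    · rw [Function.extend_apply' _ _ _ hm, Pi.zero_apply, mul_zero, smul_zero]
    · rw [he.extend_apply, Function.comp_apply]
  exact funext fun i => (he.extend_apply x 0 i).symm.trans (congrFun hext (e i))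

theorem anisotropic_weightedSumSquares_comp_iff [CommRing R] [CommRing S] [Algebra R S]
    {c : κ → R} {e : ι → κ} (he : Function.Bijective e) :
    (weightedSumSquares S (c ∘ e)).Anisotropic ↔ (weightedSumSquares S c).Anisotropic := by
  refine ⟨fun h => ?_, anisotropic_weightedSumSquares_comp he.1⟩
  have h' := anisotropic_weightedSumSquares_comp (Equiv.ofBijective e he).symm.injective h
  rwa [Function.comp_assoc, show e ∘ (Equiv.ofBijective e he).symm = id from
    (Equiv.ofBijective e he).self_comp_symm] at h'

theorem anisotropic_weightedSumSquares_of_smul [CommRing R] [CommRing S] [Algebra R S]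
    {c : ι → R} {r : R} (hc : (weightedSumSquares S (r • c)).Anisotropic) :
    (weightedSumSquares S c).Anisotropic := by
  refine fun x hx => hc x ?_
  rw [weightedSumSquares_apply] at hx ⊢
  simp only [Pi.smul_apply, smul_assoc, ← Finset.smul_sum, hx, smul_zero]

theorem anisotropic_weightedSumSquares_of_algebraMap_injective [CommRing R] [CommRing S]
    [Algebra R S] (hinj : Function.Injective (algebraMap R S)) {c : ι → R}
    (hc : (weightedSumSquares S c).Anisotropic) : (weightedSumSquares R c).Anisotropic := by
  intro x hx
  have hmap := hc (fun i => algebraMap R S (x i)) (by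
    rw [← algebraMap_weightedSumSquares, hx, map_zero])
  exact funext fun i => hinj <| (congrFun hmap i).trans (map_zero _).symm

theorem anisotropic_weightedSumSquares_pair_iff [CommRing R] [Field S] [Algebra R S] (a b : R) :
    (weightedSumSquares S ![a, b]).Anisotropic ↔ ¬ IsSquare (algebraMap R S (-(a * b))) := by
  rw [← not_iff_not, not_not, not_anisotropic_iff_exists]
  simp only [weightedSumSquares_apply, Fin.sum_univ_two, Matrix.cons_val_zero,
    Matrix.cons_val_one, Algebra.smul_def, map_neg, map_mul]
  set α := algebraMap R S a
  set β := algebraMap R S b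
  constructor
  · rintro ⟨x, hx, h⟩
    by_cases hx1 : x 1 = 0
    · have hx0 : x 0 ≠ 0 := fun hx0 => hx (by ext m; fin_cases m <;> assumption)
      have hα : α = 0 := by simpa [hx1, hx0] using h
      exact ⟨0, by rw [hα]; ring⟩
    · refine ⟨α * x 0 / x 1, ?_⟩
      field_simp
      linear_combination -α * h
  · rintro ⟨s, hs⟩
    by_cases hα : α = 0
    · exact ⟨![1, 0], fun h => one_ne_zero (congrFun h 0), by simp [hα]⟩
    · exact ⟨![s, α], fun h => hα (congrFun h 1), by
        simp only [Matrix.cons_val_zero, Matrix.cons_val_one]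
        linear_combination -α * hs⟩

end DiagonalForms

section LocalRings

variable {ι κ O : Type*} [Fintype ι] [Fintype κ] [CommRing O]

theorem mem_maximalIdeal_of_weightedSumSquares_mem [IsLocalRing O] {c : ι → O}
    (hc : (weightedSumSquares (ResidueField O) c).Anisotropic) {x : ι → O}
    (hx : weightedSumSquares O c x ∈ maximalIdeal O) (i : ι) : x i ∈ maximalIdeal O := by
  rw [← residue_eq_zero_iff, ← ResidueField.algebraMap_eq] at hx ⊢
  rw [algebraMap_weightedSumSquares] at hx
  exact congrFun (hc _ hx) i

theorem mem_maximalIdeal_of_weightedSumSquares_sumElim_eq_zero [IsDomain O] [IsLocalRing O]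
    {ϖ : O} (hϖ : maximalIdeal O = Ideal.span {ϖ}) (hϖ0 : ϖ ≠ 0) {b : ι → O} {d : κ → O}
    (hb : (weightedSumSquares (ResidueField O) b).Anisotropic)
    (hd : (weightedSumSquares (ResidueField O) d).Anisotropic) {x : ι ⊕ κ → O}
    (hx : weightedSumSquares O (Sum.elim (ϖ • b) d) x = 0) (m : ι ⊕ κ) :
    x m ∈ maximalIdeal O := by
  have hmem (r : O) : ϖ * r ∈ maximalIdeal O :=
    hϖ ▸ Ideal.mul_mem_right r _ (Ideal.mem_span_singleton_self ϖ)
  have hsplit : ϖ * weightedSumSquares O b (x ∘ Sum.inl) +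
      weightedSumSquares O d (x ∘ Sum.inr) = 0 := by
    rw [← hx, weightedSumSquares_sumElim]
    simp only [weightedSumSquares_apply, Finset.mul_sum, Pi.smul_apply, smul_eq_mul, mul_assoc]
  have hinr (j : κ) : x (Sum.inr j) ∈ maximalIdeal O :=
    mem_maximalIdeal_of_weightedSumSquares_mem hd
      (eq_neg_of_add_eq_zero_right hsplit ▸ neg_mem (hmem _)) j
  choose z hz using fun j => Ideal.mem_span_singleton'.1 (hϖ ▸ hinr j)
  have hcancel : weightedSumSquares O b (x ∘ Sum.inl) = ϖ * -weightedSumSquares O d z := by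
    refine mul_left_cancel₀ hϖ0 (eq_of_sub_eq_zero (.trans ?_ hsplit))
    simp only [weightedSumSquares_apply, Function.comp_apply, ← hz, smul_eq_mul, mul_neg,
      sub_neg_eq_add, Finset.mul_sum]
    refine congrArg _ (Finset.sum_congr rfl fun j _ => ?_)
    ring
  rcases m with i | j
  · exact mem_maximalIdeal_of_weightedSumSquares_mem hb (hcancel ▸ hmem _) i
  · exact hinr j

theorem exists_eq_mul_algebraMap_of_ne_zero [IsDomain O] [ValuationRing O] {K σ : Type*} [Field K]
    [Algebra O K] [IsFractionRing O K] [Finite σ] {x : σ → K} (hx : x ≠ 0) :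
    ∃ i, ∃ y : σ → O, x i ≠ 0 ∧ y i = 1 ∧ ∀ j, x j = x i * algebraMap O K (y j) := by
  obtain ⟨m, hm⟩ := Function.ne_iff.1 hx
  have : Nonempty σ := ⟨m⟩
  obtain ⟨i, hi⟩ := Finite.exists_max fun j => ValuationRing.valuation O K (x j)
  have hxi : x i ≠ 0 := fun h0 => hm <| by
    simpa only [h0, map_zero, le_zero_iff, map_eq_zero, Pi.zero_apply] using hi m
  have hint (j : σ) : ∃ y, algebraMap O K y = x j / x i := by
    rw [← ValuationRing.mem_integer_iff, Valuation.mem_integer_iff, map_div₀]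
    exact div_le_one_of_le₀ (hi j) zero_le
  choose y hy using hint
  refine ⟨i, y, hxi, IsFractionRing.injective O K ?_, fun j => ?_⟩
  · rw [hy, div_self hxi, map_one]
  · rw [hy, mul_div_cancel₀ _ hxi]

theorem anisotropic_weightedSumSquares_fractionRing [IsDomain O] [ValuationRing O] {K : Type*}
    [Field K] [Algebra O K] [IsFractionRing O K] {c : ι → O}
    (hc : ∀ y, weightedSumSquares O c y = 0 → ∀ i, y i ∈ maximalIdeal O) :
    (weightedSumSquares K c).Anisotropic := by
  intro x hx
  by_contra hx0
  obtain ⟨i, y, hxi, hyi, hy⟩ := exists_eq_mul_algebraMap_of_ne_zero (O := O) hx0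
  have hxy : x = x i • fun j => algebraMap O K (y j) := funext hy
  rw [hxy, QuadraticMap.map_smul, ← algebraMap_weightedSumSquares, smul_eq_zero,
    or_iff_right (mul_self_ne_zero.2 hxi), ← map_zero (algebraMap O K)] at hx
  exact (mem_maximalIdeal _).1 (hyi ▸ hc y (IsFractionRing.injective O K hx) i) isUnit_one

theorem isSquare_residue_iff [HenselianLocalRing O] (h2 : IsUnit (2 : O)) {u : O}
    (hu : IsUnit u) : IsSquare (residue O u) ↔ IsSquare u := by
  refine ⟨fun ⟨r, hr⟩ => ?_, fun h => h.map _⟩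
  obtain ⟨s, rfl⟩ := residue_surjective r
  have hroot : (X ^ 2 - C u).eval s ∈ maximalIdeal O := by
    rw [← residue_eq_zero_iff, eval_sub, eval_pow, eval_X, eval_C, map_sub, map_pow, hr, sq,
      sub_self]
  have hs : IsUnit s := by
    rw [← residue_ne_zero_iff_isUnit] at hu ⊢
    exact fun hs => hu (by rw [hr, hs, mul_zero])
  have hsimple : IsUnit ((X ^ 2 - C u).derivative.eval s) := by
    rw [derivative_sub, derivative_X_sq, derivative_C, sub_zero, eval_C_mul, eval_X]
    exact h2.mul hs
  obtain ⟨t, ht, -⟩ :=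
    HenselianLocalRing.is_henselian _ (monic_X_pow_sub_C u two_ne_zero) s hroot hsimple
  exact ⟨t, by simpa [IsRoot, sub_eq_zero, sq, eq_comm] using ht⟩

theorem exists_weightedSumSquares_update_eq_zero [HenselianLocalRing O] [DecidableEq ι]
    (h2 : IsUnit (2 : O)) {c x : ι → O} {m : ι} (hcm : IsUnit (c m)) (hxm : IsUnit (x m))
    (hx : weightedSumSquares O c x ∈ maximalIdeal O) :
    ∃ t ≠ 0, weightedSumSquares O c (Function.update x m t) = 0 := by
  obtain ⟨w, hw⟩ := hcm.exists_right_inv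
  set u := x m * x m - w * weightedSumSquares O c x with hu
  have hres : residue O u = residue O (x m) * residue O (x m) := by
    rw [hu, map_sub, map_mul, map_mul, (residue_eq_zero_iff _).2 hx, mul_zero, sub_zero]
  have hunit : IsUnit u := by
    rw [← residue_ne_zero_iff_isUnit] at hxm ⊢
    exact hres ▸ mul_self_ne_zero.2 hxm
  obtain ⟨t, ht⟩ := (isSquare_residue_iff h2 hunit).1 ⟨_, hres⟩
  refine ⟨t, left_ne_zero_of_mul (ht ▸ hunit.ne_zero), ?_⟩
  rw [weightedSumSquares_update, ← ht, hu, smul_eq_mul]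
  linear_combination -weightedSumSquares O c x * hw

theorem anisotropic_weightedSumSquares_residueField [HenselianLocalRing O] (h2 : IsUnit (2 : O))
    {c : ι → O} (hunit : ∀ i, IsUnit (c i)) (hc : (weightedSumSquares O c).Anisotropic) :
    (weightedSumSquares (ResidueField O) c).Anisotropic := by
  classical
  intro z hz
  by_contra hz0
  obtain ⟨m, hm⟩ := Function.ne_iff.1 hz0
  choose x hx using fun i => residue_surjective (R := O) (z i)
  obtain rfl : (fun i => residue O (x i)) = z := funext hx
  have hmem : weightedSumSquares O c x ∈ maximalIdeal O := by
    rwa [← residue_eq_zero_iff, ← ResidueField.algebraMap_eq, algebraMap_weightedSumSquares]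
  obtain ⟨t, ht0, ht⟩ := exists_weightedSumSquares_update_eq_zero h2 (hunit m)
    ((residue_ne_zero_iff_isUnit _).1 hm) hmem
  exact ht0 ((Function.update_self m t x).symm.trans (congrFun (hc _ ht) m))

theorem anisotropic_weightedSumSquares_sumElim_iff [IsDomain O] [IsDiscreteValuationRing O]
    [HenselianLocalRing O] (K : Type*) [Field K] [Algebra O K] [IsFractionRing O K]
    (h2 : IsUnit (2 : O)) {ϖ : O} (hϖ : Irreducible ϖ) {b : ι → O} {d : κ → O}
    (hb : ∀ i, IsUnit (b i)) (hd : ∀ j, IsUnit (d j)) :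
    (weightedSumSquares K (Sum.elim (ϖ • b) d)).Anisotropic ↔
      (weightedSumSquares (ResidueField O) b).Anisotropic ∧
        (weightedSumSquares (ResidueField O) d).Anisotropic := by
  refine ⟨fun h => ?_, fun ⟨hb', hd'⟩ => anisotropic_weightedSumSquares_fractionRing fun x hx =>
    mem_maximalIdeal_of_weightedSumSquares_sumElim_eq_zero hϖ.maximalIdeal_eq hϖ.ne_zero hb' hd' hx⟩
  replace h := anisotropic_weightedSumSquares_of_algebraMap_injective
    (IsFractionRing.injective O K) h
  exact ⟨anisotropic_weightedSumSquares_residueField h2 hb <|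
      anisotropic_weightedSumSquares_of_smul <|
        anisotropic_weightedSumSquares_comp (c := Sum.elim (ϖ • b) d) Sum.inl_injective h,
    anisotropic_weightedSumSquares_residueField h2 hd <|
      anisotropic_weightedSumSquares_comp (c := Sum.elim (ϖ • b) d) Sum.inr_injective h⟩

end LocalRings

section Completeness

instance valuationSubring_isTopologicalRing {K : Type*} [Field K] [TopologicalSpace K]
    [IsTopologicalRing K] (A : ValuationSubring K) : IsTopologicalRing A :=
  inferInstanceAs (IsTopologicalRing A.toSubring)

instance valuationSubring_isUniformAddGroup {K : Type*} [Field K] [UniformSpace K]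
    [IsUniformAddGroup K] (A : ValuationSubring K) : IsUniformAddGroup A :=
  inferInstanceAs (IsUniformAddGroup A.toSubring.toAddSubgroup)

variable {K Γ₀ : Type*} [Field K] [LinearOrderedCommGroupWithZero Γ₀] [Valued K Γ₀]

theorem mem_span_singleton_pow_iff_valued_le
    {ϖ : (Valued.v : Valuation K Γ₀).valuationSubring} (n : ℕ)
    {x : (Valued.v : Valuation K Γ₀).valuationSubring} :
    x ∈ Ideal.span {ϖ} ^ n ↔ Valued.v (x : K) ≤ Valued.v ((ϖ : K) ^ n) := by
  rw [Ideal.span_singleton_pow, Ideal.mem_span_singleton]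
  exact (Valuation.valuationSubring.integers Valued.v).dvd_iff_le

theorem isAdic_valuationSubring_span_singleton [MulArchimedean Γ₀]
    {ϖ : (Valued.v : Valuation K Γ₀).valuationSubring} (hϖ0 : ϖ ≠ 0)
    (hϖ : Valued.v (ϖ : K) < 1) : IsAdic (Ideal.span {ϖ}) := by
  refine isAdic_iff.2 ⟨fun n => ?_, fun s hs => ?_⟩
  · have hne : Valued.v.restrict ((ϖ : K) ^ n) ≠ 0 := by
      rw [ne_eq, map_eq_zero]
      exact pow_ne_zero n (Subtype.coe_ne_coe.2 hϖ0)
    have hball :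
        ((Ideal.span {ϖ} ^ n : Ideal _) : Set (Valued.v : Valuation K Γ₀).valuationSubring) =
          Subtype.val ⁻¹' {x : K | Valued.v.restrict x ≤ Valued.v.restrict ((ϖ : K) ^ n)} :=
      Set.ext fun x =>
        (mem_span_singleton_pow_iff_valued_le n).trans (Valuation.restrict_le_iff _).symm
    exact hball ▸ (Valued.isOpen_closedBall K hne).preimage continuous_subtype_val
  · obtain ⟨t, ht, hts⟩ := mem_nhds_induced _ _ _ |>.1 hs
    obtain ⟨γ, hγ⟩ := Valued.mem_nhds_zero.1 ht
    obtain ⟨n, hn⟩ := ((Valued.tendsto_zero_pow_of_v_lt_one hϖ).eventually_mem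
      (Valued.mem_nhds_zero.2 ⟨γ, subset_rfl⟩)).exists
    exact ⟨n, fun x hx => hts <| hγ <| lt_of_le_of_lt
      ((Valuation.restrict_le_iff _).2 <| (mem_span_singleton_pow_iff_valued_le n).1 hx) hn⟩

theorem isAdicComplete_valuationSubring_span_singleton [MulArchimedean Γ₀] [CompleteSpace K]
    {ϖ : (Valued.v : Valuation K Γ₀).valuationSubring} (hϖ0 : ϖ ≠ 0)
    (hϖ : Valued.v (ϖ : K) < 1) :
    IsAdicComplete (Ideal.span {ϖ}) (Valued.v : Valuation K Γ₀).valuationSubring :=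
  (isAdic_valuationSubring_span_singleton hϖ0 hϖ).isAdicComplete_iff.2
    ⟨(Valued.isClosed_valuationSubring K).completeSpace_coe, inferInstance⟩

theorem henselianLocalRing_of_isAdicComplete (O : Type*) [CommRing O] [IsLocalRing O]
    [IsAdicComplete (maximalIdeal O) O] : HenselianLocalRing O where
  is_henselian p hp x hx hsimple :=
    HenselianRing.is_henselian p hp x hx (hsimple.map (Ideal.Quotient.mk (maximalIdeal O)))

end Completeness

theorem lt_one_iff_le_exp_neg_one {x : WithZero (Multiplicative ℤ)} :
    x < 1 ↔ x ≤ WithZero.exp (-1) := by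
  rcases eq_or_ne x 0 with rfl | hx
  · simp
  · rw [← WithZero.exp_zero, ← WithZero.log_lt_iff_lt_exp hx, ← WithZero.log_le_iff_le_exp hx]
    omega

theorem isSquare_mk_ker_iff {R S : Type*} [CommRing R] [CommRing S] {φ : R →+* S}
    (hφ : Function.Surjective φ) {r : R} :
    IsSquare (Ideal.Quotient.mk (RingHom.ker φ) r) ↔ IsSquare (φ r) := by
  let e := RingHom.quotientKerEquivOfSurjective hφ
  exact ⟨fun h => h.map e, fun h => e.symm_apply_apply (Ideal.Quotient.mk _ r) ▸ h.map e.symm⟩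

section AdicCompletion

variable {R : Type*} [CommRing R] [IsDedekindDomain R] (K : Type*) [Field K] [Algebra R K]
  [IsFractionRing R K] (v : HeightOneSpectrum R)

local notation "𝒪" => HeightOneSpectrum.adicCompletionIntegers K v

theorem valued_algebraMap_adicCompletionIntegers (r : R) :
    Valued.v (algebraMap R 𝒪 r : v.adicCompletion K) = v.intValuation r := by
  rw [← HeightOneSpectrum.valuation_of_algebraMap (K := K)]
  exact HeightOneSpectrum.valuedAdicCompletion_eq_valuation (K := K) v r

theorem valued_algebraMap_adicCompletion (x : K) :
    Valued.v (algebraMap K (v.adicCompletion K) x) = v.valuation K x :=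
  HeightOneSpectrum.valuedAdicCompletion_eq_valuation' v x

theorem algebraMap_mem_maximalIdeal_adicCompletionIntegers_iff {r : R} :
    algebraMap R 𝒪 r ∈ maximalIdeal 𝒪 ↔ r ∈ v.asIdeal := by
  rw [← HeightOneSpectrum.intValuation_lt_one_iff_mem, ← valued_algebraMap_adicCompletionIntegers K]
  exact Valuation.mem_maximalIdeal_iff _ _

theorem isUnit_algebraMap_adicCompletionIntegers_iff {r : R} :
    IsUnit (algebraMap R 𝒪 r) ↔ r ∉ v.asIdeal := by
  rw [← algebraMap_mem_maximalIdeal_adicCompletionIntegers_iff K, mem_maximalIdeal,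
    mem_nonunits_iff, not_not]

theorem irreducible_algebraMap_adicCompletionIntegers {π : R}
    (hπ : v.intValuation π = WithZero.exp (-1)) : Irreducible (algebraMap R 𝒪 π) := by
  rw [IsDiscreteValuationRing.irreducible_iff_uniformizer]
  ext x
  rw [Ideal.mem_span_singleton,
    (HeightOneSpectrum.adicCompletionIntegers.integers K v).dvd_iff_le]
  refine (Valuation.mem_maximalIdeal_iff _ _).trans ?_
  rw [lt_one_iff_le_exp_neg_one, ← hπ, ← valued_algebraMap_adicCompletionIntegers K]
  rfl

instance henselianLocalRing_adicCompletionIntegers : HenselianLocalRing 𝒪 := by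
  obtain ⟨ϖ, hϖ⟩ := IsDiscreteValuationRing.exists_irreducible 𝒪
  have hlt : Valued.v (ϖ : v.adicCompletion K) < 1 :=
    (Valuation.mem_maximalIdeal_iff _ _).1 hϖ.not_isUnit
  have : IsAdicComplete (maximalIdeal 𝒪) 𝒪 := by
    rw [hϖ.maximalIdeal_eq]
    exact isAdicComplete_valuationSubring_span_singleton hϖ.ne_zero hlt
  exact henselianLocalRing_of_isAdicComplete 𝒪

theorem exists_valued_algebraMap_sub_lt_one {x : v.adicCompletion K} (hx : Valued.v x ≤ 1) :
    ∃ r : R, Valued.v (algebraMap R (v.adicCompletion K) r - x) < 1 := by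
  have hopen : IsOpen {y : v.adicCompletion K | Valued.v (y - x) < 1} := by
    simpa only [Valuation.restrict_lt_one_iff, Set.preimage_ofPred_eq] using
      (Valued.isOpen_ball (v.adicCompletion K) 1).preimage (continuous_sub_right x)
  obtain ⟨y, hy⟩ := (HeightOneSpectrum.denseRange_algebraMap K v).exists_mem_open hopen
    ⟨x, by simp⟩
  have hy1 : v.valuation K y ≤ 1 := by
    rw [← valued_algebraMap_adicCompletion]
    have h := Valued.v.map_add_le (le_of_lt hy) hx
    rwa [sub_add_cancel] at h
  obtain ⟨r, hr⟩ := v.exists_valuation_sub_lt_of_integer hy1 1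
  rw [← valued_algebraMap_adicCompletion, map_sub, ← IsScalarTower.algebraMap_apply,
    Units.val_one] at hr
  refine ⟨r, ?_⟩
  have h := Valued.v.map_add_lt hr hy
  rwa [sub_add_sub_cancel] at h

theorem algebraMap_residueField_adicCompletionIntegers_surjective :
    Function.Surjective (algebraMap R (ResidueField 𝒪)) := by
  intro z
  obtain ⟨x, rfl⟩ := residue_surjective z
  obtain ⟨r, hr⟩ := exists_valued_algebraMap_sub_lt_one K v x.2
  refine ⟨r, ?_⟩
  rw [IsScalarTower.algebraMap_apply R 𝒪, ResidueField.algebraMap_eq, ← sub_eq_zero, ← map_sub,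
    residue_eq_zero_iff]
  exact (Valuation.mem_maximalIdeal_iff _ _).2 hr

theorem ker_algebraMap_residueField_adicCompletionIntegers :
    RingHom.ker (algebraMap R (ResidueField 𝒪)) = v.asIdeal := by
  ext r
  rw [RingHom.mem_ker, IsScalarTower.algebraMap_apply R 𝒪, ResidueField.algebraMap_eq,
    residue_eq_zero_iff, algebraMap_mem_maximalIdeal_adicCompletionIntegers_iff]

theorem isSquare_algebraMap_residueField_adicCompletionIntegers_iff {r : R} :
    IsSquare (algebraMap R (ResidueField 𝒪) r) ↔ IsSquare (Ideal.Quotient.mk v.asIdeal r) := by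
  rw [← isSquare_mk_ker_iff (algebraMap_residueField_adicCompletionIntegers_surjective K v),
    ker_algebraMap_residueField_adicCompletionIntegers]

theorem anisotropic_weightedSumSquares_adicCompletion_sumElim_iff {ι κ : Type*} [Fintype ι]
    [Fintype κ] (h2 : (2 : R) ∉ v.asIdeal) {π : R} (hπ : v.intValuation π = WithZero.exp (-1))
    {b : ι → R} {d : κ → R} (hb : ∀ i, b i ∉ v.asIdeal) (hd : ∀ j, d j ∉ v.asIdeal) :
    (weightedSumSquares (v.adicCompletion K) (Sum.elim (π • b) d)).Anisotropic ↔
      (weightedSumSquares (ResidueField 𝒪) b).Anisotropic ∧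
        (weightedSumSquares (ResidueField 𝒪) d).Anisotropic := by
  have hunit {r : R} (hr : r ∉ v.asIdeal) : IsUnit (algebraMap R 𝒪 r) :=
    (isUnit_algebraMap_adicCompletionIntegers_iff K v).2 hr
  have hcoeff : algebraMap R 𝒪 ∘ Sum.elim (π • b) d =
      Sum.elim (algebraMap R 𝒪 π • (algebraMap R 𝒪 ∘ b)) (algebraMap R 𝒪 ∘ d) := by
    ext (m | m)
    · simp only [Function.comp_apply, Sum.elim_inl, Pi.smul_apply, smul_eq_mul, map_mul]
    · rfl
  rw [← weightedSumSquares_algebraMap_comp (A := 𝒪), hcoeff,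
    anisotropic_weightedSumSquares_sumElim_iff (v.adicCompletion K)
      (b := algebraMap R 𝒪 ∘ b) (d := algebraMap R 𝒪 ∘ d)
      (map_ofNat (algebraMap R 𝒪) 2 ▸ hunit h2)
      (irreducible_algebraMap_adicCompletionIntegers K v hπ)
      (fun i => hunit (hb i)) (fun j => hunit (hd j)),
    weightedSumSquares_algebraMap_comp, weightedSumSquares_algebraMap_comp]

end AdicCompletion

theorem sumElim_pair_bijective_of_eq_univ {i j k l : Fin 4}
    (h : ({i, j, k, l} : Finset (Fin 4)) = Finset.univ) :
    Function.Bijective (Sum.elim ![i, j] ![k, l]) := by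
  rw [Fintype.bijective_iff_surjective_and_card]
  refine ⟨fun m => ?_, rfl⟩
  have hm : m ∈ ({i, j, k, l} : Finset (Fin 4)) := h ▸ Finset.mem_univ m
  simpa [Sum.exists, Fin.exists_fin_two, eq_comm, or_assoc] using hm

theorem quaternary_local_isotropy_iff_general
    {R : Type*} [CommRing R] [IsDedekindDomain R] (K : Type*) [Field K] [Algebra R K]
    [IsFractionRing R K] (v : HeightOneSpectrum R) (h2 : (2 : R) ∉ v.asIdeal)
    {π : R} (hπ : v.intValuation π = WithZero.exp (-1)) (a : Fin 4 → R)
    (i j k l : Fin 4) (huniv : ({i, j, k, l} : Finset (Fin 4)) = Finset.univ) {b c : R}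
    (hi : a i = π * b) (hj : a j = π * c) (hb : b ∉ v.asIdeal) (hc : c ∉ v.asIdeal)
    (hk : a k ∉ v.asIdeal) (hl : a l ∉ v.asIdeal) :
    (∃ x : Fin 4 → v.adicCompletion K,
        x ≠ 0 ∧ ∑ m, algebraMap R (v.adicCompletion K) (a m) * x m ^ 2 = 0) ↔
      (IsSquare (Ideal.Quotient.mk v.asIdeal (-(a k * a l))) ∨
        IsSquare (Ideal.Quotient.mk v.asIdeal (-(b * c)))) := by
  have hcoeff : a ∘ Sum.elim ![i, j] ![k, l] = Sum.elim (π • ![b, c]) ![a k, a l] := by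
    rw [Sum.comp_elim]
    congr 1 <;> ext m <;> fin_cases m <;> simp [hi, hj]
  have hanisotropic : (weightedSumSquares (v.adicCompletion K) a).Anisotropic ↔
      ¬ IsSquare (Ideal.Quotient.mk v.asIdeal (-(b * c))) ∧
        ¬ IsSquare (Ideal.Quotient.mk v.asIdeal (-(a k * a l))) := by
    rw [← anisotropic_weightedSumSquares_comp_iff (sumElim_pair_bijective_of_eq_univ huniv),
      hcoeff, anisotropic_weightedSumSquares_adicCompletion_sumElim_iff K v h2 hπ
        (Fin.forall_fin_two.2 ⟨hb, hc⟩) (Fin.forall_fin_two.2 ⟨hk, hl⟩),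
      anisotropic_weightedSumSquares_pair_iff, anisotropic_weightedSumSquares_pair_iff,
      isSquare_algebraMap_residueField_adicCompletionIntegers_iff,
      isSquare_algebraMap_residueField_adicCompletionIntegers_iff]
  rw [← not_iff_not, not_or, and_comm, ← hanisotropic, ← not_iff_not, not_not,
    not_anisotropic_iff_exists]
  simp only [weightedSumSquares_apply, Algebra.smul_def, sq]

theorem mem_primeOfIrreducible_iff {F : Type*} [Field F] {f : F[X]} (hf : Irreducible f)
    {g : F[X]} : g ∈ (primeOfIrreducible hf).asIdeal ↔ f ∣ g :=
  Ideal.mem_span_singleton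

theorem two_notMem_primeOfIrreducible {F : Type*} [Field F] (hF : ringChar F ≠ 2) {f : F[X]}
    (hf : Irreducible f) : (2 : F[X]) ∉ (primeOfIrreducible hf).asIdeal := by
  have h2 : IsUnit (2 : F[X]) :=
    map_ofNat (C : F →+* F[X]) 2 ▸ (isUnit_iff_ne_zero.2 (Ring.two_ne_zero hF)).map C
  exact fun h => (primeOfIrreducible hf).isPrime.ne_top (Ideal.eq_top_of_isUnit_mem _ h h2)

theorem not_dvd_div_of_squarefree {R : Type*} [EuclideanDomain R] {f g : R} (hf : Irreducible f)
    (hg : Squarefree g) (hfg : f ∣ g) : ¬ f ∣ g / f := fun h =>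
  hf.not_isUnit <| hg f <| EuclideanDomain.mul_div_cancel' hf.ne_zero hfg ▸ mul_dvd_mul_left f h

/-- for squarefree `a₁, a₂, a₃, a₄` and a monic irreducible `f` dividing
exactly the two coefficients `aᵢ, aⱼ` (and not `a_k, a_l`), the equation
`a₁x₁² + a₂x₂² + a₃x₃² + a₄x₄² = 0` has a nontrivial solution in the `f`-adic completion
of `𝔽_q(t)` iff `−a_k a_l` or `−(aᵢ/f)(aⱼ/f)` is a square modulo `f`. -/
theorem quaternary_local_isotropy_iff
    {F : Type*} [Field F] [Fintype F] (hodd : ringChar F ≠ 2)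
    (a : Fin 4 → F[X]) (ha : ∀ m, Squarefree (a m))
    (f : F[X]) (hfm : f.Monic) (hf : Irreducible f)
    (i j k l : Fin 4) (huniv : ({i, j, k, l} : Finset (Fin 4)) = Finset.univ)
    (hdi : f ∣ a i) (hdj : f ∣ a j) (hdk : ¬ f ∣ a k) (hdl : ¬ f ∣ a l) :
    (∃ x : Fin 4 → (primeOfIrreducible hf).adicCompletion (RatFunc F),
        x ≠ 0 ∧
        ∑ m, algebraMap F[X] ((primeOfIrreducible hf).adicCompletion (RatFunc F)) (a m)
            * x m ^ 2 = 0) ↔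
      (IsSquare (Ideal.Quotient.mk (Ideal.span {f}) (-(a k * a l))) ∨
       IsSquare (Ideal.Quotient.mk (Ideal.span {f}) (-((a i / f) * (a j / f))))) := by
  have hmem {g : F[X]} (hg : ¬ f ∣ g) : g ∉ (primeOfIrreducible hf).asIdeal :=
    mt (mem_primeOfIrreducible_iff hf).1 hg
  exact quaternary_local_isotropy_iff_general (RatFunc F) (primeOfIrreducible hf)
    (two_notMem_primeOfIrreducible hodd hf)
    (HeightOneSpectrum.intValuation_singleton _ hf.ne_zero rfl) a i j k l huniv
    (EuclideanDomain.mul_div_cancel' hf.ne_zero hdi).symm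
    (EuclideanDomain.mul_div_cancel' hf.ne_zero hdj).symm
    (hmem (not_dvd_div_of_squarefree hf (ha i) hdi))
    (hmem (not_dvd_div_of_squarefree hf (ha j) hdj)) (hmem hdk) (hmem hdl)
end

section
/- Let a₁, a₂, a₃, a₄ ∈ 𝔽[t] be squarefree nonzero polynomials. Assume that aᵢ and aⱼ are of even degree and the other two coefficients a_k and a_l are of odd degree (where {i,j,k,l} = {1,2,3,4}). Let c_m denote the leading coefficient of a_m for m = 1, …, 4. Then the quadratic form a₁x₁² + a₂x₂² + a₃x₃² + a₄x₄² has no nontrivial zero over 𝔽((1/t)) if and only if −cᵢcⱼ and −c_k c_l are both non-squares in 𝔽. -/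
open Polynomial

/-- The embedding of `𝔽[t]` into `𝔽((1/t))`, sending `t` to the inverse of the
Laurent-series variable `u`. -/
noncomputable def polyToLaurentInfty (F : Type*) [Field F] : F[X] →+* LaurentSeries F :=
  (Polynomial.aeval ((HahnSeries.single (1 : ℤ) (1 : F) : LaurentSeries F)⁻¹)).toRingHom

/-!
Up to squares, a nonzero `p ∈ F[t]` equals its leading term in `F((1/t))`: by Hensel's lemma every
power series with constant coefficient `1` is a square. The form therefore becomes
`∑ cₘ u⁻ᵈ⁽ᵐ⁾ xₘ²`, where `cₘ` and `d(m)` are the leading coefficient and the degree of `aₘ`.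
By a theorem of Springer, such a form is anisotropic if and only if its residue forms over `F`,
obtained by collecting the `cₘ` with `d(m)` of a given parity, are: in a nontrivial zero, the terms
of least order all have `d(m)` of the same parity, so their leading coefficients give a nontrivial
zero of a residue form. Here the residue forms are binary, and `⟨b, c⟩` is anisotropic if and only
if `-bc` is not a square.
-/

section DiagonalForms

/-- Anisotropy of the diagonal quadratic form with coefficients `c m`, where `m` runs through `s`.
The coefficients are indexed by an ambient type so that subforms are given by smaller `s`. -/
def DiagAnisotropic {ι R : Type*} [CommRing R] (s : Finset ι) (c : ι → R) : Prop :=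
  (QuadraticMap.weightedSumSquares R fun m : s => c m).Anisotropic

section CommRing

variable {ι R : Type*} [CommRing R] {s t : Finset ι} {c : ι → R}

theorem diagAnisotropic_iff :
    DiagAnisotropic s c ↔
      ∀ x : ι → R, ∑ m ∈ s, c m * x m ^ 2 = 0 → ∀ m ∈ s, x m = 0 := by
  classical
  simp only [DiagAnisotropic, QuadraticMap.Anisotropic, QuadraticMap.weightedSumSquares_apply,
    smul_eq_mul, ← sq]
  constructor
  · intro h x hx m hm
    exact congrFun (h (fun m => x m) (by rwa [Finset.sum_coe_sort s fun m => c m * x m ^ 2]))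
      ⟨m, hm⟩
  · intro h y hy
    have hzero := h (fun m => if hm : m ∈ s then y ⟨m, hm⟩ else 0) (by
      rw [← Finset.sum_coe_sort]
      simpa using hy)
    ext m
    simpa using hzero m m.2

theorem diagAnisotropic_univ_iff [Fintype ι] :
    DiagAnisotropic Finset.univ c ↔ ∀ x : ι → R, ∑ m, c m * x m ^ 2 = 0 → x = 0 := by
  simp [diagAnisotropic_iff, funext_iff]

theorem DiagAnisotropic.mono (h : DiagAnisotropic t c) (hst : s ⊆ t) : DiagAnisotropic s c := by
  classical
  rw [diagAnisotropic_iff] at h ⊢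
  intro x hx m hm
  have hzero := h (fun m => if m ∈ s then x m else 0) (by
    simpa [ite_pow, Finset.sum_ite_mem, Finset.inter_eq_right.2 hst] using hx) m (hst hm)
  simpa [hm] using hzero

theorem diagAnisotropic_congr {c' : ι → R} (h : ∀ m ∈ s, c m = c' m) :
    DiagAnisotropic s c ↔ DiagAnisotropic s c' := by
  have hsum (x : ι → R) : ∑ m ∈ s, c m * x m ^ 2 = ∑ m ∈ s, c' m * x m ^ 2 :=
    Finset.sum_congr rfl fun m hm => by rw [h m hm]
  simp only [diagAnisotropic_iff, hsum]

end CommRing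

section Field

variable {ι K : Type*} [Field K] {s : Finset ι} {c : ι → K}

theorem diagAnisotropic_mul_sq_iff {v : ι → K} (hv : ∀ m ∈ s, v m ≠ 0) :
    DiagAnisotropic s (fun m => c m * v m ^ 2) ↔ DiagAnisotropic s c := by
  simp only [diagAnisotropic_iff]
  constructor
  · intro h x hx m hm
    have hzero := h (fun m => x m / v m) (by
      rw [← hx]
      refine Finset.sum_congr rfl fun m hm => ?_
      have := hv m hm
      field_simp) m hm
    exact (div_eq_zero_iff.1 hzero).resolve_right (hv m hm)
  · intro h x hx m hm
    have hzero := h (fun m => v m * x m) (by simpa only [mul_pow, ← mul_assoc] using hx) m hm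
    exact (mul_eq_zero.1 hzero).resolve_left (hv m hm)

theorem diagAnisotropic_pair_iff [DecidableEq ι] {p q : ι} (hpq : p ≠ q) :
    DiagAnisotropic {p, q} c ↔ ¬ IsSquare (-(c p * c q)) := by
  simp only [diagAnisotropic_iff, Finset.sum_pair hpq, Finset.forall_mem_insert,
    Finset.mem_singleton, forall_eq]
  constructor
  · rintro h ⟨e, he⟩
    have zero_of_eq (y z : K) (hyz : c p * y ^ 2 + c q * z ^ 2 = 0) : y = 0 ∧ z = 0 := by
      simpa [hpq.symm] using h (fun m => if m = p then y else z) (by simpa [hpq.symm] using hyz)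
    have hp : c p = 0 := (zero_of_eq e (c p) (by linear_combination -c p * he)).2
    exact one_ne_zero (zero_of_eq 1 0 (by simp [hp])).1
  · intro hsq x hx
    have hq : x q = 0 := by
      by_contra hq
      refine hsq ⟨c p * x p / x q, ?_⟩
      field_simp
      linear_combination -c p * hx
    have hp : c p ≠ 0 := fun hp => hsq (by simp [hp])
    simpa [hq, hp] using hx

end Field

end DiagonalForms

section Springer

open scoped HahnSeries

section Order

variable {Γ R : Type*} [AddCommMonoid Γ] [LinearOrder Γ] [IsOrderedCancelAddMonoid Γ]

section Semiring

variable [Semiring R]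

theorem hahnSeries_coeff_sq_add_self {x : R⟦Γ⟧} {k : Γ} (hx : ∀ j < k, x.coeff j = 0) :
    (x ^ 2).coeff (k + k) = x.coeff k ^ 2 := by
  rw [sq, sq, HahnSeries.coeff_mul]
  refine Finset.sum_eq_single (k, k) ?_ ?_
  · rintro ⟨i, j⟩ hij hne
    simp only [Finset.mem_antidiagonal, HahnSeries.mem_support] at hij
    have hi : k ≤ i := not_lt.1 fun h => hij.1 (hx i h)
    have hj : k ≤ j := not_lt.1 fun h => hij.2.1 (hx j h)
    obtain ⟨rfl, rfl⟩ := (add_eq_add_iff_eq_and_eq hi hj).1 hij.2.2.symm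
    exact absurd rfl hne
  · intro hk
    have : x.coeff k = 0 := by simpa using hk
    simp [this]

theorem hahnSeries_coeff_sq_eq_zero_of_not_even {x : R⟦Γ⟧} {n : Γ} (hn : ¬ Even n)
    (hx : ∀ j, j + j < n → x.coeff j = 0) : (x ^ 2).coeff n = 0 := by
  rw [sq, HahnSeries.coeff_mul]
  refine Finset.sum_eq_zero ?_
  rintro ⟨i, j⟩ hij
  obtain ⟨-, -, rfl : i + j = n⟩ := by simpa using hij
  rcases lt_trichotomy i j with h | rfl | h
  · simp [hx i (by gcongr)]
  · exact absurd ⟨i, rfl⟩ hn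
  · simp [hx j (by gcongr)]

end Semiring

theorem exists_least_weighted_order [Zero R] {ι : Type*} {s : Finset ι} (e : ι → Γ) {x : ι → R⟦Γ⟧}
    (hx : ∃ m ∈ s, x m ≠ 0) :
    ∃ N, (∀ m ∈ s, ∀ j, e m + (j + j) < N → (x m).coeff j = 0) ∧
      ∃ m ∈ s, ∃ j, e m + (j + j) = N ∧ (x m).coeff j ≠ 0 := by
  classical
  obtain ⟨m₀, hm₀, hmin⟩ := Finset.exists_min_image {m ∈ s | x m ≠ 0}
    (fun m => e m + ((x m).order + (x m).order)) (by simpa [Finset.Nonempty] using hx)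
  simp only [Finset.mem_filter] at hm₀ hmin
  refine ⟨_, fun m hm j hj => ?_, m₀, hm₀.1, _, rfl, HahnSeries.coeff_order_eq_zero.not.2 hm₀.2⟩
  by_contra hne
  have hle : (x m).order ≤ j := HahnSeries.order_le_of_coeff_ne_zero hne
  have hxm : x m ≠ 0 := fun h => hne (by simp [h])
  exact hj.not_ge ((hmin m ⟨hm, hxm⟩).trans (by gcongr))

end Order

variable {ι Γ R : Type*} [AddCommGroup Γ] [LinearOrder Γ] [IsOrderedAddMonoid Γ] [CommRing R]

theorem DiagAnisotropic.of_hahnSeries_single {s : Finset ι} {e : ι → Γ} {c : ι → R} {r : Γ}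
    (he : ∀ m ∈ s, Even (r - e m))
    (h : DiagAnisotropic s fun m => (HahnSeries.single (e m) (c m) : R⟦Γ⟧)) :
    DiagAnisotropic s c := by
  choose! k hk using he
  rw [diagAnisotropic_iff] at h ⊢
  intro y hy m hm
  refine HahnSeries.single_eq_zero_iff.1 (h (fun m => HahnSeries.single (k m) (y m)) ?_ m hm)
  calc ∑ m ∈ s, HahnSeries.single (e m) (c m) * HahnSeries.single (k m) (y m) ^ 2
      = ∑ m ∈ s, HahnSeries.single r (c m * y m ^ 2) := Finset.sum_congr rfl fun m hm => by
        rw [sq, HahnSeries.single_mul_single, HahnSeries.single_mul_single, ← hk m hm,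
          add_sub_cancel, sq]
    _ = HahnSeries.single r (∑ m ∈ s, c m * y m ^ 2) :=
        (map_sum (HahnSeries.single.addMonoidHom r) _ s).symm
    _ = 0 := by rw [hy, map_zero]

theorem DiagAnisotropic.hahnSeries_single [DecidablePred (Even : Γ → Prop)] {s : Finset ι}
    {e : ι → Γ} {c : ι → R} (h : ∀ r, DiagAnisotropic {m ∈ s | Even (r - e m)} c) :
    DiagAnisotropic s fun m => (HahnSeries.single (e m) (c m) : R⟦Γ⟧) := by
  rw [diagAnisotropic_iff]
  intro x hx
  by_contra! hne
  obtain ⟨N, hlt, m₀, hm₀, j₀, hj₀, hne₀⟩ := exists_least_weighted_order e hne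
  have hhalf (m : ι) (hm : Even (N - e m)) : ∃ k, N - e m = k + k := hm
  choose! k hk using hhalf
  have hcoeff : ∑ m ∈ s with Even (N - e m), c m * (x m).coeff (k m) ^ 2 = 0 := by
    have hN := congrArg (fun z : R⟦Γ⟧ => z.coeff N) hx
    simp only [HahnSeries.coeff_sum, HahnSeries.coeff_single_mul, HahnSeries.coeff_zero] at hN
    rw [← hN, Finset.sum_filter]
    refine Finset.sum_congr rfl fun m hm => ?_
    split_ifs with heven
    · rw [hk m heven, hahnSeries_coeff_sq_add_self fun j hj => hlt m hm j ?_]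
      rw [← lt_sub_iff_add_lt', hk m heven]
      gcongr
    · rw [hahnSeries_coeff_sq_eq_zero_of_not_even heven fun j hj =>
        hlt m hm j (lt_sub_iff_add_lt'.1 hj), mul_zero]
  have heven₀ : N - e m₀ = j₀ + j₀ := by rw [← hj₀, add_sub_cancel_left]
  have hk₀ : k m₀ = j₀ :=
    (strictMono_id.add strictMono_id).injective ((hk m₀ ⟨j₀, heven₀⟩).symm.trans heven₀)
  refine hne₀ (hk₀ ▸ diagAnisotropic_iff.1 (h N) (fun m => (x m).coeff (k m)) hcoeff m₀ ?_)
  exact Finset.mem_filter.2 ⟨hm₀, j₀, heven₀⟩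

-- Springer's theorem: the residue form at `r` depends only on the class of `r` in `Γ / 2Γ`.
theorem diagAnisotropic_hahnSeries_single_iff [DecidablePred (Even : Γ → Prop)] {s : Finset ι}
    {e : ι → Γ} {c : ι → R} :
    DiagAnisotropic s (fun m => (HahnSeries.single (e m) (c m) : R⟦Γ⟧)) ↔
      ∀ r, DiagAnisotropic {m ∈ s | Even (r - e m)} c :=
  ⟨fun h _ => (h.mono (Finset.filter_subset _ s)).of_hahnSeries_single fun _ hm =>
    (Finset.mem_filter.1 hm).2,
    .hahnSeries_single⟩

theorem diagAnisotropic_laurentSeries_single_iff {s : Finset ι} {e : ι → ℤ} {c : ι → R} :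
    DiagAnisotropic s (fun m => (HahnSeries.single (e m) (c m) : LaurentSeries R)) ↔
      DiagAnisotropic {m ∈ s | Even (e m)} c ∧ DiagAnisotropic {m ∈ s | Odd (e m)} c := by
  rw [diagAnisotropic_hahnSeries_single_iff]
  constructor
  · intro h
    exact ⟨by simpa using h 0, by simpa [Int.even_sub, Int.not_even_one] using h 1⟩
  · rintro ⟨heven, hodd⟩ r
    rcases Int.even_or_odd r with hr | hr
    · simpa [Int.even_sub, hr] using heven
    · simpa [Int.even_sub, Int.not_even_iff_odd.2 hr] using hodd

end Springer

section SquareClass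

theorem isSquare_powerSeries_of_constantCoeff_eq_one {R : Type*} [CommRing R] (h2 : IsUnit (2 : R))
    {f : PowerSeries R} (hf : PowerSeries.constantCoeff f = 1) : IsSquare f := by
  have hroot : 1 - f ∈ Ideal.span {(PowerSeries.X : PowerSeries R)} := by
    simp [Ideal.mem_span_singleton, PowerSeries.X_dvd_iff, hf]
  have hderiv : IsUnit (2 : PowerSeries R) := map_ofNat (PowerSeries.C (R := R)) 2 ▸ h2.map _
  obtain ⟨g, hg, -⟩ := HenselianRing.is_henselian
    (I := Ideal.span {(PowerSeries.X : PowerSeries R)})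
    (X ^ 2 - C f) (monic_X_pow_sub_C f two_ne_zero) 1 (by simpa using hroot)
    (by simpa [one_add_one_eq_two] using hderiv.map (Ideal.Quotient.mk _))
  exact ⟨g, by simpa [IsRoot, sub_eq_zero, sq, eq_comm] using hg⟩

variable {F : Type*} [Field F]

theorem polyToLaurentInfty_eq_ofPowerSeries_reverse_mul (p : F[X]) :
    polyToLaurentInfty F p =
      HahnSeries.ofPowerSeries ℤ F p.reverse * HahnSeries.single (-(p.natDegree : ℤ)) 1 := by
  let u : LaurentSeries F := HahnSeries.single 1 1
  let _ : Invertible u⁻¹ := invertibleOfNonzero (inv_ne_zero (by simp [u]))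
  have hcoe (r : F[X]) : aeval u r = HahnSeries.ofPowerSeries ℤ F r := by
    induction r using Polynomial.induction_on' with
    | add r r' hr hr' => simp [hr, hr']
    | monomial n b =>
      rw [aeval_monomial, ← C_mul_X_pow_eq_monomial]
      simp [u, HahnSeries.ofPowerSeries_C, HahnSeries.C_apply, LaurentSeries.algebraMap_apply]
  have hpow : (u⁻¹) ^ p.natDegree = HahnSeries.single (-(p.natDegree : ℤ)) 1 := by
    simp [u]
  rw [← hcoe, ← hpow]
  change aeval u⁻¹ p = _
  simpa [aeval_def] using (eval₂_reverse_mul_pow (algebraMap F (LaurentSeries F)) u⁻¹ p).symm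

theorem exists_polyToLaurentInfty_eq_single_mul_sq (h2 : (2 : F) ≠ 0) {p : F[X]} (hp : p ≠ 0) :
    ∃ v : LaurentSeries F, v ≠ 0 ∧
      polyToLaurentInfty F p =
        HahnSeries.single (-(p.natDegree : ℤ)) p.leadingCoeff * v ^ 2 := by
  have hlc : p.leadingCoeff ≠ 0 := leadingCoeff_ne_zero.2 hp
  obtain ⟨g, hg⟩ := isSquare_powerSeries_of_constantCoeff_eq_one h2.isUnit
    (f := PowerSeries.C p.leadingCoeff⁻¹ * p.reverse) (by simp [hlc])
  have hrev : (p.reverse : PowerSeries F) = PowerSeries.C p.leadingCoeff * g ^ 2 := by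
    rw [sq, ← hg, ← mul_assoc, ← map_mul, mul_inv_cancel₀ hlc, map_one, one_mul]
  refine ⟨HahnSeries.ofPowerSeries ℤ F g, ?_, ?_⟩
  · rw [Ne, map_eq_zero_iff _ HahnSeries.ofPowerSeries_injective]
    rintro rfl
    simp [hp] at hrev
  · rw [polyToLaurentInfty_eq_ofPowerSeries_reverse_mul, hrev, map_mul, map_pow,
      HahnSeries.ofPowerSeries_C, mul_right_comm, HahnSeries.C_apply, HahnSeries.single_mul_single,
      zero_add, mul_one]

theorem diagAnisotropic_polyToLaurentInfty_iff (h2 : (2 : F) ≠ 0) {ι : Type*} {s : Finset ι}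
    {a : ι → F[X]} (ha : ∀ m ∈ s, a m ≠ 0) :
    DiagAnisotropic s (fun m => polyToLaurentInfty F (a m)) ↔
      DiagAnisotropic {m ∈ s | Even (a m).natDegree} (fun m => (a m).leadingCoeff) ∧
        DiagAnisotropic {m ∈ s | Odd (a m).natDegree} (fun m => (a m).leadingCoeff) := by
  choose! v hv hav using fun m hm => exists_polyToLaurentInfty_eq_single_mul_sq h2 (ha m hm)
  rw [diagAnisotropic_congr hav, diagAnisotropic_mul_sq_iff hv,
    diagAnisotropic_laurentSeries_single_iff]
  simp only [even_neg, odd_neg, Int.even_coe_nat, Int.odd_coe_nat]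

end SquareClass

theorem quaternary_anisotropic_at_infinity_iff_general
    {F : Type*} [Field F] (hodd : ringChar F ≠ 2)
    (a : Fin 4 → F[X]) (ha : ∀ m, a m ≠ 0)
    (i j k l : Fin 4) (huniv : ({i, j, k, l} : Finset (Fin 4)) = Finset.univ)
    (hei : Even (a i).natDegree) (hej : Even (a j).natDegree)
    (hok : Odd (a k).natDegree) (hol : Odd (a l).natDegree) :
    (∀ x : Fin 4 → LaurentSeries F,
        ∑ m, polyToLaurentInfty F (a m) * x m ^ 2 = 0 → x = 0) ↔
      (¬ IsSquare (-((a i).leadingCoeff * (a j).leadingCoeff)) ∧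
       ¬ IsSquare (-((a k).leadingCoeff * (a l).leadingCoeff))) := by
  have hdistinct : ∀ i j k l : Fin 4,
      ({i, j, k, l} : Finset (Fin 4)) = Finset.univ → i ≠ j ∧ k ≠ l := by decide
  obtain ⟨hij, hkl⟩ := hdistinct i j k l huniv
  have hevenDegree : ({m | Even (a m).natDegree} : Finset (Fin 4)) = {i, j} := by
    simp [← huniv, Finset.filter_insert, Finset.filter_singleton, hei, hej,
      Nat.not_even_iff_odd.2 hok, Nat.not_even_iff_odd.2 hol]
  have hoddDegree : ({m | Odd (a m).natDegree} : Finset (Fin 4)) = {k, l} := by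
    simp [← huniv, Finset.filter_insert, Finset.filter_singleton, hok, hol,
      Nat.not_odd_iff_even.2 hei, Nat.not_odd_iff_even.2 hej]
  rw [← diagAnisotropic_univ_iff,
    diagAnisotropic_polyToLaurentInfty_iff (Ring.two_ne_zero hodd) fun m _ => ha m,
    hevenDegree, hoddDegree, diagAnisotropic_pair_iff hij, diagAnisotropic_pair_iff hkl]

/-- for squarefree `a₁, a₂, a₃, a₄` with `aᵢ, aⱼ` of even degree and
`a_k, a_l` of odd degree, the quadratic form `a₁x₁² + a₂x₂² + a₃x₃² + a₄x₄²` has no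
nontrivial zero over `𝔽((1/t))` iff `−cᵢcⱼ` and `−c_k c_l` are both non-squares in `𝔽`,
where `c_m` is the leading coefficient of `a_m`. -/
theorem quaternary_anisotropic_at_infinity_iff
    {F : Type*} [Field F] [Fintype F] (hodd : ringChar F ≠ 2)
    (a : Fin 4 → F[X]) (ha : ∀ m, Squarefree (a m))
    (i j k l : Fin 4) (huniv : ({i, j, k, l} : Finset (Fin 4)) = Finset.univ)
    (hei : Even (a i).natDegree) (hej : Even (a j).natDegree)
    (hok : Odd (a k).natDegree) (hol : Odd (a l).natDegree) :
    (∀ x : Fin 4 → LaurentSeries F,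
        ∑ m, polyToLaurentInfty F (a m) * x m ^ 2 = 0 → x = 0) ↔
      (¬ IsSquare (-((a i).leadingCoeff * (a j).leadingCoeff)) ∧
       ¬ IsSquare (-((a k).leadingCoeff * (a l).leadingCoeff))) := by
  exact quaternary_anisotropic_at_infinity_iff_general hodd a
    (fun m => (ha m).ne_zero) i j k l huniv hei hej hok hol
end

section
/- Let Q(x₁,x₂,x₃,x₄) = a₁x₁² + a₂x₂² + a₃x₃² + a₄x₄² be a diagonal quadratic form with nonzero coefficients aᵢ ∈ 𝔽[t]. Then at least one of the following holds: (a) there exists a monic irreducible polynomial f ∈ 𝔽[t] such that Q has no nontrivial zero in the f-adic completion 𝔽_q(t)_(f); or (b) there exist a minimized diagonal quadratic form Q'(x₁,x₂,x₃,x₄) = b₁x₁² + b₂x₂² + b₃x₃² + b₄x₄², a nonzero g ∈ 𝔽_q(t), and an invertible 4×4 matrix M over 𝔽_q(t) such that g·Q(Mx) = Q'(x) for all x ∈ 𝔽_q(t)⁴ (i.e. Q' is projectively equivalent to Q). -/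
open Polynomial IsDedekindDomain

set_option synthInstance.maxHeartbeats 1000000

/-- A diagonal quaternary quadratic form `a₁x₁² + a₂x₂² + a₃x₃² + a₄x₄²` with nonzero
coefficients `aᵢ ∈ 𝔽[t]` is minimized if: (1) each `aᵢ` is squarefree; (2) `a₁a₂a₃a₄` is
cubefree; (3) whenever a monic irreducible `f` does not divide `aᵢ` and `aⱼ` but divides
the other two coefficients, `−aᵢaⱼ` is a square modulo `f`; (4) the number of square
leading coefficients among the `aᵢ` is at least the number of non-square ones. -/
def IsMinimized {F : Type*} [Field F] (a : Fin 4 → F[X]) : Prop :=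
  (∀ m, a m ≠ 0) ∧
  (∀ m, Squarefree (a m)) ∧
  (∀ f : F[X], f.Monic → Irreducible f → ¬ f ^ 3 ∣ (a 0 * a 1 * a 2 * a 3)) ∧
  (∀ f : F[X], f.Monic → Irreducible f → ∀ i j k l : Fin 4,
      ({i, j, k, l} : Finset (Fin 4)) = Finset.univ →
      ¬ f ∣ a i → ¬ f ∣ a j → f ∣ a k → f ∣ a l →
      IsSquare (Ideal.Quotient.mk (Ideal.span {f}) (-(a i * a j)))) ∧
  (Nat.card {m : Fin 4 // IsSquare ((a m).leadingCoeff)} ≥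
    Nat.card {m : Fin 4 // ¬ IsSquare ((a m).leadingCoeff)})

/-!
Write `⟨b⟩` for the diagonal form with coefficients `b`. Dividing by squares we may assume that
the coefficients are squarefree. Call a prime `f` bad if at least three coefficients are divisible
by `f`, or if exactly two are and minus the product of the other two is not a square modulo `f`.
Twist `⟨b⟩` by `h = u ∏ f`, the product running over the finitely many bad primes, and remove
squares again to get `⟨c⟩`. This exchanges the divisible and the non-divisible coefficients at
every bad prime and does not affect the other primes, so a prime at which `⟨c⟩` is bad is bad for
`⟨b⟩` as well, and both forms have exactly two coefficients divisible by it. Over the completion,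
`h·⟨b⟩` is then the sum of `h·⟨bᵢ, bⱼ⟩` and `⟨cₖ, cₗ⟩`, where all entries are units and both
binary forms are anisotropic modulo `f`. The nonzero values of the two binary forms have even
valuation and `h` has odd valuation, so `⟨b⟩` is anisotropic (Springer's argument). Otherwise
`⟨c⟩` is minimized, the constant `u` being chosen to fix the leading coefficients.
-/

section Squares

theorem isSquare_of_mul_sq_eq_mul_sq {G₀ : Type*} [CommGroupWithZero G₀] {x y d e : G₀}
    (hd : d ≠ 0) (h : x * d ^ 2 = y * e ^ 2) (hy : IsSquare y) : IsSquare x := by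
  rw [(eq_div_iff (pow_ne_zero 2 hd)).2 h]
  exact (hy.mul (IsSquare.sq e)).div (IsSquare.sq d)

theorem isSquare_mk_of_mul_sq_eq_mul_sq {R : Type*} [CommRing R] {I : Ideal R} [I.IsMaximal]
    {x y d e : R} (hd : d ∉ I) (h : x * d ^ 2 = y * e ^ 2)
    (hy : IsSquare (Ideal.Quotient.mk I y)) : IsSquare (Ideal.Quotient.mk I x) := by
  let := Ideal.Quotient.field I
  refine isSquare_of_mul_sq_eq_mul_sq (d := Ideal.Quotient.mk I d) (e := Ideal.Quotient.mk I e)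
    (mt Ideal.Quotient.eq_zero_iff_mem.1 hd) ?_ hy
  simpa only [map_mul, map_pow] using congrArg (Ideal.Quotient.mk I) h

theorem isSquare_mul_of_not_isSquare {F : Type*} [Field F] [Finite F] {c d : F}
    (hc : ¬ IsSquare c) (hd : ¬ IsSquare d) : IsSquare (c * d) := by
  classical
  have := Fintype.ofFinite F
  have hne {x : F} (hx : ¬ IsSquare x) : x ≠ 0 := by
    rintro rfl
    exact hx IsSquare.zero
  rw [← quadraticChar_one_iff_isSquare (mul_ne_zero (hne hc) (hne hd)), map_mul,
    quadraticChar_neg_one_iff_not_isSquare.2 hc, quadraticChar_neg_one_iff_not_isSquare.2 hd,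
    neg_one_mul, neg_neg]

theorem exists_ne_zero_card_not_isSquare_mul_le {F ι : Type*} [Field F] [Finite ι]
    (hF : ∀ c d : F, ¬ IsSquare c → ¬ IsSquare d → IsSquare (c * d)) (a : ι → F) :
    ∃ u : F, u ≠ 0 ∧
      Nat.card {m // ¬ IsSquare (u * a m)} ≤ Nat.card {m // IsSquare (u * a m)} := by
  by_cases h : Nat.card {m // ¬ IsSquare (a m)} ≤ Nat.card {m // IsSquare (a m)}
  · exact ⟨1, one_ne_zero, by simpa only [one_mul] using h⟩
  obtain ⟨n, hn⟩ : ∃ n, ¬ IsSquare (a n) := by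
    by_contra! hsq
    have : IsEmpty {m // ¬ IsSquare (a m)} := ⟨fun m => m.2 (hsq m)⟩
    exact h (Nat.card_of_isEmpty.trans_le (Nat.zero_le _))
  have hn0 : a n ≠ 0 := fun h0 => hn (h0 ▸ IsSquare.zero)
  have hmul {m : ι} (hm : ¬ IsSquare (a m)) : IsSquare (a n * a m) := hF _ _ hn hm
  refine ⟨a n, hn0, ?_⟩
  calc Nat.card {m // ¬ IsSquare (a n * a m)}
      ≤ Nat.card {m // IsSquare (a m)} :=
        Nat.card_mono (Set.toFinite _) fun _ hm => not_imp_comm.1 hmul hm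
    _ ≤ Nat.card {m // ¬ IsSquare (a m)} := (not_le.1 h).le
    _ ≤ Nat.card {m // IsSquare (a n * a m)} := Nat.card_mono (Set.toFinite _) fun _ => hmul

end Squares

section Squarefree

theorem exists_squarefree_mul_sq {R : Type*} [CommMonoidWithZero R] [IsCancelMulZero R]
    [WfDvdMonoid R] {x : R} (hx : x ≠ 0) : ∃ c e : R, Squarefree c ∧ x = c * e ^ 2 := by
  induction x using (wellFounded_dvdNotUnit (α := R)).induction with
  | _ x ih =>
    by_cases hsq : Squarefree x
    · exact ⟨x, 1, hsq, by rw [one_pow, mul_one]⟩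
    simp only [Squarefree, not_forall] at hsq
    obtain ⟨y, ⟨u, rfl⟩, hy⟩ := hsq
    have hu : u ≠ 0 := right_ne_zero_of_mul hx
    obtain ⟨c, e, hc, rfl⟩ := ih u
      ⟨hu, y * y, fun hyy => hy (isUnit_of_mul_isUnit_left hyy), mul_comm _ _⟩ hu
    exact ⟨c, y * e, hc, by rw [mul_pow, ← pow_two, mul_left_comm]⟩

theorem emultiplicity_of_squarefree {R : Type*} [CommMonoid R] {f x : R} [Decidable (f ∣ x)]
    (hf : ¬ IsUnit f) (hx : Squarefree x) : emultiplicity f x = if f ∣ x then 1 else 0 := by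
  split_ifs with h
  · exact le_antisymm (((squarefree_iff_emultiplicity_le_one x).1 hx f).resolve_right hf)
      (by simpa using le_emultiplicity_of_pow_dvd (k := 1) (by simpa using h))
  · exact emultiplicity_eq_zero.2 h

variable {R : Type*} [CommMonoidWithZero R] [IsCancelMulZero R]

theorem pow_dvd_prod_iff_of_squarefree {ι : Type*} {f : R} (hf : Prime f)
    {s : Finset ι} {b : ι → R} [DecidablePred (f ∣ b ·)] (hb : ∀ m ∈ s, Squarefree (b m))
    {n : ℕ} :
    f ^ n ∣ ∏ m ∈ s, b m ↔ n ≤ (s.filter (f ∣ b ·)).card := by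
  have hmult : emultiplicity f (∏ m ∈ s, b m) = (s.filter (f ∣ b ·)).card := by
    rw [Finset.emultiplicity_prod hf,
      Finset.sum_congr rfl fun m hm => emultiplicity_of_squarefree hf.not_isUnit (hb m hm),
      Finset.sum_boole]
  rw [pow_dvd_iff_le_emultiplicity, hmult, Nat.cast_le]

theorem dvd_iff_not_iff_of_mul_eq_mul_sq [WfDvdMonoid R] {f h b c e : R} (hf : Prime f)
    (hh : Squarefree h) (hb : Squarefree b) (hc : Squarefree c) (he : e ≠ 0)
    (heq : h * b = c * e ^ 2) : f ∣ c ↔ ¬ (f ∣ h ↔ f ∣ b) := by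
  classical
  -- compare the parities of the multiplicities of `f` on the two sides
  have hmult := congrArg (emultiplicity f) heq
  rw [emultiplicity_mul hf, emultiplicity_mul hf, emultiplicity_pow hf,
    (FiniteMultiplicity.of_prime_left hf he).emultiplicity_eq_multiplicity,
    emultiplicity_of_squarefree hf.not_isUnit hh, emultiplicity_of_squarefree hf.not_isUnit hb,
    emultiplicity_of_squarefree hf.not_isUnit hc] at hmult
  norm_cast at hmult
  split_ifs at hmult <;> first | omega | tauto

end Squarefree

section Valuation

variable {K Γ₀ : Type*} [Field K] [LinearOrderedCommGroupWithZero Γ₀] (v : Valuation K Γ₀)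

/- The hypothesis `hpq` says that `-(p * q)` is not a square in the residue field, i.e. that the
binary form `⟨p, q⟩` is anisotropic there. -/
theorem valuation_binary_form {p q : K} (hp : v p = 1) (hq : v q = 1)
    (hpq : ∀ z, 1 ≤ v (p * q + z ^ 2)) (x y : K) :
    v (p * x ^ 2 + q * y ^ 2) = max (v x) (v y) ^ 2 := by
  wlog hyx : v y ≤ v x generalizing p q x y
  · rw [add_comm, max_comm]
    exact this hq hp (by simpa only [mul_comm] using hpq) y x (le_of_not_ge hyx)
  rw [max_eq_left hyx]
  rcases eq_or_ne x 0 with rfl | hx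
  · obtain rfl : y = 0 := by simpa using hyx
    simp
  apply le_antisymm
  · refine (v.map_add _ _).trans (max_le ?_ ?_)
    · rw [map_mul, map_pow, hp, one_mul]
    · rw [map_mul, map_pow, hq, one_mul]
      exact pow_le_pow_left' hyx 2
  · have hfactor : q * (p * x ^ 2 + q * y ^ 2) = x ^ 2 * (p * q + (q * y / x) ^ 2) := by
      field_simp
    calc v x ^ 2 ≤ v x ^ 2 * v (p * q + (q * y / x) ^ 2) := le_mul_of_one_le_right' (hpq _)
      _ = v (q * (p * x ^ 2 + q * y ^ 2)) := by rw [hfactor, map_mul, map_pow]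
      _ = v (p * x ^ 2 + q * y ^ 2) := by rw [map_mul, hq, one_mul]

theorem eq_zero_of_quaternary_form_eq_zero {p q r s π : K} (hp : v p = 1) (hq : v q = 1)
    (hr : v r = 1) (hs : v s = 1) (hpq : ∀ z, 1 ≤ v (p * q + z ^ 2))
    (hrs : ∀ z, 1 ≤ v (r * s + z ^ 2)) (hπ : ¬ IsSquare (v π)) {x y z w : K}
    (h : π * (p * x ^ 2 + q * y ^ 2) + (r * z ^ 2 + s * w ^ 2) = 0) :
    (x = 0 ∧ y = 0) ∧ z = 0 ∧ w = 0 := by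
  have hv : v π * max (v x) (v y) ^ 2 = max (v z) (v w) ^ 2 := by
    rw [← valuation_binary_form v hp hq hpq, ← valuation_binary_form v hr hs hrs, ← map_mul,
      eq_neg_of_add_eq_zero_left h, v.map_neg]
  have hxy : max (v x) (v y) = 0 := by
    by_contra hne
    exact hπ (isSquare_of_mul_sq_eq_mul_sq hne (hv.trans (one_mul _).symm) IsSquare.one)
  have hzw : max (v z) (v w) = 0 := by
    rw [hxy, zero_pow two_ne_zero, mul_zero] at hv
    exact pow_eq_zero_iff two_ne_zero |>.1 hv.symm
  have max_eq_zero {a b : K} (hab : max (v a) (v b) = 0) : a = 0 ∧ b = 0 := by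
    simpa using hab.le
  exact ⟨max_eq_zero hxy, max_eq_zero hzw⟩

end Valuation

section AdicCompletion

variable {R K : Type*} [CommRing R] [IsDedekindDomain R] [Field K] [Algebra R K]
  [IsFractionRing R K] (v : HeightOneSpectrum R)

theorem valued_adicCompletion_algebraMap (x : R) :
    Valued.v (algebraMap R (v.adicCompletion K) x) = v.intValuation x := by
  rw [← v.valuation_of_algebraMap (K := K)]
  exact v.valuedAdicCompletion_eq_valuation x

theorem valued_adicCompletion_algebraMap_le_one (x : R) :
    Valued.v (algebraMap R (v.adicCompletion K) x) ≤ 1 :=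
  (valued_adicCompletion_algebraMap v x).trans_le (v.intValuation_le_one x)

instance faithfulSMul_adicCompletion : FaithfulSMul R (v.adicCompletion K) :=
  (faithfulSMul_iff_algebraMap_injective R _).2 <| by
    rw [IsScalarTower.algebraMap_eq R K]
    exact (algebraMap K (v.adicCompletion K)).injective.comp (IsFractionRing.injective R K)

theorem exists_valued_sub_algebraMap_lt_one {z : v.adicCompletion K} (hz : Valued.v z ≤ 1) :
    ∃ r : R, Valued.v (z - algebraMap R (v.adicCompletion K) r) < 1 := by
  have hopen : IsOpen {y : v.adicCompletion K | Valued.v (z - y) < 1} := by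
    have hball : IsOpen {y : v.adicCompletion K | Valued.v y < 1} := by
      simpa only [Valuation.restrict_lt_one_iff] using Valued.isOpen_ball (v.adicCompletion K) 1
    exact hball.preimage (continuous_const.sub continuous_id)
  obtain ⟨k, hk : Valued.v (z - algebraMap K (v.adicCompletion K) k) < 1⟩ :=
    (HeightOneSpectrum.denseRange_algebraMap (K := K) v).exists_mem_open hopen ⟨z, by simp⟩
  have hval (k : K) : Valued.v (algebraMap K (v.adicCompletion K) k) = v.valuation K k :=
    v.valuedAdicCompletion_eq_valuation' k
  have hk1 : v.valuation K k ≤ 1 := by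
    rw [← hval, ← sub_sub_cancel z (algebraMap K (v.adicCompletion K) k)]
    exact (Valuation.map_sub _ _ _).trans (max_le hz hk.le)
  obtain ⟨r, hr⟩ := v.exists_valuation_sub_lt_of_integer hk1 1
  refine ⟨r, ?_⟩
  rw [← sub_add_sub_cancel z (algebraMap K (v.adicCompletion K) k),
    IsScalarTower.algebraMap_apply R K, ← map_sub]
  refine Valuation.map_add_lt _ hk ?_
  rw [hval, Valuation.map_sub_swap]
  exact hr

theorem isSquare_mk_of_valued_sub_sq_lt_one {x : R} {z : v.adicCompletion K}
    (hz : Valued.v (algebraMap R (v.adicCompletion K) x - z ^ 2) < 1) :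
    IsSquare (Ideal.Quotient.mk v.asIdeal x) := by
  have hz1 : Valued.v z ≤ 1 := by
    rw [← pow_le_one_iff two_ne_zero, ← map_pow,
      ← sub_sub_cancel (algebraMap R (v.adicCompletion K) x) (z ^ 2)]
    exact (Valuation.map_sub _ _ _).trans
      (max_le (valued_adicCompletion_algebraMap_le_one v x) hz.le)
  obtain ⟨r, hr⟩ := exists_valued_sub_algebraMap_lt_one v hz1
  suffices x - r ^ 2 ∈ v.asIdeal from
    ⟨Ideal.Quotient.mk _ r, by rwa [← map_mul, Ideal.Quotient.eq, ← pow_two]⟩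
  have hsum : Valued.v (z + algebraMap R (v.adicCompletion K) r) ≤ 1 :=
    (Valuation.map_add _ _ _).trans (max_le hz1 (valued_adicCompletion_algebraMap_le_one v r))
  have hsplit : algebraMap R (v.adicCompletion K) (x - r ^ 2) =
      (algebraMap R (v.adicCompletion K) x - z ^ 2) +
        (z + algebraMap R (v.adicCompletion K) r) * (z - algebraMap R (v.adicCompletion K) r) := by
    rw [map_sub, map_pow]
    ring
  rw [← v.intValuation_lt_one_iff_mem, ← valued_adicCompletion_algebraMap (K := K), hsplit]
  refine Valuation.map_add_lt _ hz ?_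
  rw [map_mul]
  exact (mul_le_of_le_one_left' hsum).trans_lt hr

theorem not_isSquare_intValuation_of_squarefree {f h : R} (hv : v.asIdeal = Ideal.span {f})
    (hh : Squarefree h) (hfh : f ∣ h) : ¬ IsSquare (v.intValuation h) := by
  obtain ⟨k, rfl⟩ := hfh
  have hf0 : f ≠ 0 := fun h0 => v.ne_bot (by rw [hv, h0, Ideal.span_singleton_zero])
  have hk : k ∉ v.asIdeal := fun hk => v.isPrime.ne_top <| by
    rw [hv, Ideal.span_singleton_eq_top]
    exact hh f (mul_dvd_mul_left f (Ideal.mem_span_singleton.1 (hv ▸ hk)))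
  rw [map_mul, v.intValuation_singleton hf0 hv, HeightOneSpectrum.intValuation_eq_one_iff.2 hk,
    mul_one]
  rintro ⟨γ, hγ⟩
  have hγ0 : γ ≠ 0 := by
    rintro rfl
    simp at hγ
  have hlog := congrArg WithZero.log hγ
  rw [WithZero.log_exp, WithZero.log_mul hγ0 hγ0] at hlog
  omega

end AdicCompletion

section Twist

/-- The diagonal form `⟨c⟩` is the twist of `⟨b⟩` by `h`: the forms `h·⟨b⟩` and `⟨c⟩` agree
coefficient by coefficient up to nonzero squares. The squares are only allowed on the side of `c`,
which suffices for passing to squarefree coefficients and avoids fractions. -/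
def IsTwist {R ι : Type*} [MonoidWithZero R] (h : R) (b c : ι → R) : Prop :=
  ∀ m, ∃ e ≠ 0, h * b m = c m * e ^ 2

variable {R ι : Type*}

theorem exists_squarefree_isTwist [CommMonoidWithZero R] [IsCancelMulZero R] [WfDvdMonoid R]
    {h : R} {b : ι → R} (hh : h ≠ 0) (hb : ∀ m, b m ≠ 0) :
    ∃ c : ι → R, (∀ m, Squarefree (c m)) ∧ IsTwist h b c := by
  have hhb (m : ι) : h * b m ≠ 0 := mul_ne_zero hh (hb m)
  choose c e hc heq using fun m => exists_squarefree_mul_sq (hhb m)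
  refine ⟨c, hc, fun m => ⟨e m, fun he => hhb m ?_, heq m⟩⟩
  rw [heq m, he, zero_pow two_ne_zero, mul_zero]

theorem IsTwist.trans [CommMonoidWithZero R] [NoZeroDivisors R] {h h' : R} {a b c : ι → R}
    (hab : IsTwist h a b) (hbc : IsTwist h' b c) : IsTwist (h' * h) a c := fun m => by
  obtain ⟨d, hd, had⟩ := hab m
  obtain ⟨e, he, hbe⟩ := hbc m
  exact ⟨e * d, mul_ne_zero he hd, by rw [mul_assoc, had, ← mul_assoc, hbe, mul_assoc, ← mul_pow]⟩

theorem IsTwist.exists_weightedSumSquares_eq {K : Type*} [Fintype ι] [CommRing R] [CommRing K]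
    [Algebra R K] {h : R} {b c : ι → R} (hbc : IsTwist h b c) :
    ∃ e : ι → R, (∀ m, e m ≠ 0) ∧ ∀ x : ι → K,
      h • QuadraticMap.weightedSumSquares K b x =
        QuadraticMap.weightedSumSquares K c fun m => e m • x m := by
  choose e he heq using hbc
  refine ⟨e, he, fun x => ?_⟩
  simp only [QuadraticMap.weightedSumSquares_apply, Finset.smul_sum, smul_smul, heq, smul_mul_smul,
    pow_two]

theorem IsTwist.anisotropic {K : Type*} [Fintype ι] [CommRing R] [CommRing K] [IsDomain K]
    [Algebra R K] [FaithfulSMul R K] {h : R} {b c : ι → R} (hbc : IsTwist h b c)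
    (hc : (QuadraticMap.weightedSumSquares K c).Anisotropic) :
    (QuadraticMap.weightedSumSquares K b).Anisotropic := by
  obtain ⟨e, he, heq⟩ := hbc.exists_weightedSumSquares_eq (K := K)
  intro x hx
  have hex := hc _ ((heq x).symm.trans (by rw [hx, smul_zero]))
  funext m
  have hm : algebraMap R K (e m) * x m = 0 := by rw [← Algebra.smul_def]; exact congrFun hex m
  exact (mul_eq_zero.1 hm).resolve_left
    ((map_ne_zero_iff _ (FaithfulSMul.algebraMap_injective R K)).2 (he m))

theorem IsTwist.exists_matrix {K : Type*} [Fintype ι] [DecidableEq ι] [CommRing R] [Field K]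
    [Algebra R K] [FaithfulSMul R K] {h : R} {b c : ι → R} (hbc : IsTwist h b c) :
    ∃ M : Matrix ι ι K, IsUnit M ∧ ∀ x : ι → K,
      algebraMap R K h * ∑ m, algebraMap R K (b m) * M.mulVec x m ^ 2 =
        ∑ m, algebraMap R K (c m) * x m ^ 2 := by
  obtain ⟨e, he, heq⟩ := hbc.exists_weightedSumSquares_eq (K := K)
  have he' (m : ι) : algebraMap R K (e m) ≠ 0 :=
    (map_ne_zero_iff _ (FaithfulSMul.algebraMap_injective R K)).2 (he m)
  refine ⟨Matrix.diagonal fun m => (algebraMap R K (e m))⁻¹, ?_, fun x => ?_⟩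
  · exact Matrix.isUnit_diagonal.2 (Pi.isUnit_iff.2 fun m => (inv_ne_zero (he' m)).isUnit)
  · have hcancel (m : ι) : algebraMap R K (e m) * ((algebraMap R K (e m))⁻¹ * x m) = x m :=
      mul_inv_cancel_left₀ (he' m) (x m)
    simpa only [QuadraticMap.weightedSumSquares_apply, Algebra.smul_def, ← pow_two,
      Matrix.mulVec_diagonal, hcancel] using heq fun m => (algebraMap R K (e m))⁻¹ * x m

end Twist

section Reduced

variable {R ι : Type*} [Fintype ι]

/-- The indices of the coefficients of `⟨b⟩` that are divisible by `f`. -/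
noncomputable def divisibleIndices [CommMonoid R] (f : R) (b : ι → R) : Finset ι :=
  open Classical in {m | f ∣ b m}

theorem mem_divisibleIndices [CommMonoid R] {f : R} {b : ι → R} {m : ι} :
    m ∈ divisibleIndices f b ↔ f ∣ b m := by
  classical
  simp [divisibleIndices]

theorem divisibleIndices_eq_of_isTwist_of_not_dvd [CommMonoidWithZero R] [IsCancelMulZero R]
    [WfDvdMonoid R] {f h : R} {b c : ι → R} (hf : Prime f) (hh : Squarefree h)
    (hb : ∀ m, Squarefree (b m)) (hc : ∀ m, Squarefree (c m)) (hbc : IsTwist h b c)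
    (hfh : ¬ f ∣ h) : divisibleIndices f c = divisibleIndices f b := by
  ext m
  obtain ⟨e, he, heq⟩ := hbc m
  have := dvd_iff_not_iff_of_mul_eq_mul_sq hf hh (hb m) (hc m) he heq
  rw [mem_divisibleIndices, mem_divisibleIndices]
  tauto

theorem divisibleIndices_eq_compl_of_isTwist_of_dvd [DecidableEq ι] [CommMonoidWithZero R]
    [IsCancelMulZero R] [WfDvdMonoid R] {f h : R} {b c : ι → R} (hf : Prime f) (hh : Squarefree h)
    (hb : ∀ m, Squarefree (b m)) (hc : ∀ m, Squarefree (c m)) (hbc : IsTwist h b c)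
    (hfh : f ∣ h) : divisibleIndices f c = (divisibleIndices f b)ᶜ := by
  ext m
  obtain ⟨e, he, heq⟩ := hbc m
  have := dvd_iff_not_iff_of_mul_eq_mul_sq hf hh (hb m) (hc m) he heq
  rw [Finset.mem_compl, mem_divisibleIndices, mem_divisibleIndices]
  tauto

/-- The quaternary form `⟨b⟩` with squarefree coefficients satisfies conditions (2) and (3) in the
definition of a minimized form at the prime `f`. Indexing by the set of coefficients divisible by
`f` removes the choice of an ordering `i, j, k, l` from condition (3). -/
def IsReducedAt [DecidableEq ι] [CommRing R] (f : R) (b : ι → R) : Prop :=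
  (divisibleIndices f b).card ≤ 2 ∧
    ((divisibleIndices f b).card = 2 →
      IsSquare (Ideal.Quotient.mk (Ideal.span {f}) (-∏ m ∈ (divisibleIndices f b)ᶜ, b m)))

variable [DecidableEq ι]

theorem two_le_card_divisibleIndices_of_not_isReducedAt [CommRing R] {f : R} {b : ι → R}
    (h : ¬ IsReducedAt f b) : 2 ≤ (divisibleIndices f b).card := by
  by_contra! hcard
  exact h ⟨hcard.le, fun heq => absurd heq hcard.ne⟩

theorem dvd_prod_of_not_isReducedAt [CommRing R] {f : R} {b : ι → R} (h : ¬ IsReducedAt f b) :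
    f ∣ ∏ m, b m := by
  obtain ⟨m, hm⟩ := Finset.card_pos.1
    (two_pos.trans_le (two_le_card_divisibleIndices_of_not_isReducedAt h))
  exact (mem_divisibleIndices.1 hm).trans (Finset.dvd_prod_of_mem b (Finset.mem_univ m))

theorem IsReducedAt.not_pow_three_dvd [CommRing R] [IsDomain R] {f : R} {b : ι → R} (hf : Prime f)
    (hb : ∀ m, Squarefree (b m)) (h : IsReducedAt f b) : ¬ f ^ 3 ∣ ∏ m, b m := by
  classical
  rw [pow_dvd_prod_iff_of_squarefree hf fun m _ => hb m, not_le]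
  exact Nat.lt_succ_of_le h.1

theorem IsReducedAt.isSquare_mk [CommRing R] {f : R} {b : Fin 4 → R}
    (h : IsReducedAt f b) {i j k l : Fin 4} (hu : ({i, j, k, l} : Finset (Fin 4)) = Finset.univ)
    (hi : ¬ f ∣ b i) (hj : ¬ f ∣ b j) (hk : f ∣ b k) (hl : f ∣ b l) :
    IsSquare (Ideal.Quotient.mk (Ideal.span {f}) (-(b i * b j))) := by
  have hset : ∀ i j k l : Fin 4, ({i, j, k, l} : Finset (Fin 4)) = Finset.univ →
      i ≠ j ∧ k ≠ l ∧ ({k, l} : Finset (Fin 4))ᶜ = {i, j} := by decide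
  obtain ⟨hij, hkl, hcompl⟩ := hset i j k l hu
  have hD : divisibleIndices f b = {k, l} := by
    ext m
    rw [mem_divisibleIndices]
    constructor
    · contrapose
      rw [← Finset.mem_compl, hcompl, Finset.mem_insert, Finset.mem_singleton]
      rintro (rfl | rfl) <;> assumption
    · rw [Finset.mem_insert, Finset.mem_singleton]
      rintro (rfl | rfl) <;> assumption
  have hsq := h.2 (by rw [hD, Finset.card_pair hkl])
  rwa [hD, hcompl, Finset.prod_pair hij] at hsq

theorem IsReducedAt.of_isTwist_of_not_dvd [CommRing R] [IsDomain R] [WfDvdMonoid R] {f h : R}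
    {b c : ι → R} [(Ideal.span {f}).IsMaximal] (hf : Prime f) (hι : Fintype.card ι = 4)
    (hh : Squarefree h) (hb : ∀ m, Squarefree (b m)) (hc : ∀ m, Squarefree (c m))
    (hbc : IsTwist h b c) (hfh : ¬ f ∣ h) (hred : IsReducedAt f b) : IsReducedAt f c := by
  have hD := divisibleIndices_eq_of_isTwist_of_not_dvd hf hh hb hc hbc hfh
  rw [IsReducedAt, hD]
  refine ⟨hred.1, fun hcard => ?_⟩
  choose e _ heq using hbc
  have hprod : (-∏ m ∈ (divisibleIndices f b)ᶜ, c m) * (∏ m ∈ (divisibleIndices f b)ᶜ, e m) ^ 2 =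
      (-∏ m ∈ (divisibleIndices f b)ᶜ, b m) * h ^ 2 := by
    have hpow : ∏ _m ∈ (divisibleIndices f b)ᶜ, h = h ^ 2 := by
      rw [Finset.prod_const, Finset.card_compl, hι, hcard]
    rw [neg_mul, neg_mul, ← Finset.prod_pow, ← Finset.prod_mul_distrib, mul_comm _ (h ^ 2),
      ← hpow, ← Finset.prod_mul_distrib, Finset.prod_congr rfl fun m _ => (heq m).symm]
  refine isSquare_mk_of_mul_sq_eq_mul_sq ?_ hprod (hred.2 hcard)
  rw [Ideal.mem_span_singleton, hf.dvd_finsetProd_iff]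
  rintro ⟨m, hm, hfe⟩
  rw [Finset.mem_compl, mem_divisibleIndices] at hm
  exact (hf.dvd_or_dvd (heq m ▸ (hfe.trans (dvd_pow_self _ two_ne_zero)).mul_left _)).elim hfh hm

end Reduced

section LocalAnisotropy

variable {R ι : Type*} (K : Type*) [CommRing R] [IsDedekindDomain R] [Field K] [Algebra R K]
  [IsFractionRing R K] [Fintype ι] [DecidableEq ι] (v : HeightOneSpectrum R) {h : R} {b c : ι → R}

theorem one_le_valued_mul_add_sq {p q : R}
    (hpq : ¬ IsSquare (Ideal.Quotient.mk v.asIdeal (-(p * q)))) (z : v.adicCompletion K) :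
    1 ≤ Valued.v (algebraMap R (v.adicCompletion K) p * algebraMap R (v.adicCompletion K) q +
      z ^ 2) := by
  by_contra! hlt
  refine hpq (isSquare_mk_of_valued_sub_sq_lt_one (K := K) v (z := z) ?_)
  rwa [map_neg, map_mul, ← neg_add', Valuation.map_neg]

theorem anisotropic_of_isTwist_of_not_isSquare (hbc : IsTwist h b c)
    (hh : ¬ IsSquare (v.intValuation h)) {i j k l : ι} (hij : i ≠ j) (hkl : k ≠ l)
    (hcompl : ({i, j} : Finset ι)ᶜ = {k, l}) (hi : b i ∉ v.asIdeal) (hj : b j ∉ v.asIdeal)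
    (hk : c k ∉ v.asIdeal) (hl : c l ∉ v.asIdeal)
    (hbij : ¬ IsSquare (Ideal.Quotient.mk v.asIdeal (-(b i * b j))))
    (hckl : ¬ IsSquare (Ideal.Quotient.mk v.asIdeal (-(c k * c l)))) :
    (QuadraticMap.weightedSumSquares (v.adicCompletion K) b).Anisotropic := by
  have hunit {r : R} (hr : r ∉ v.asIdeal) :
      Valued.v (algebraMap R (v.adicCompletion K) r) = 1 := by
    rw [valued_adicCompletion_algebraMap, HeightOneSpectrum.intValuation_eq_one_iff.2 hr]
  have hinj : Function.Injective (algebraMap R (v.adicCompletion K)) :=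
    FaithfulSMul.algebraMap_injective _ _
  obtain ⟨d, hd, hkd⟩ := hbc k
  obtain ⟨e, he, hle⟩ := hbc l
  intro x hx
  have hsum : algebraMap R (v.adicCompletion K) h *
        (algebraMap R _ (b i) * x i ^ 2 + algebraMap R _ (b j) * x j ^ 2) +
      (algebraMap R _ (c k) * (algebraMap R _ d * x k) ^ 2 +
        algebraMap R _ (c l) * (algebraMap R _ e * x l) ^ 2) = 0 := by
    have hkd' := congrArg (algebraMap R (v.adicCompletion K)) hkd
    have hle' := congrArg (algebraMap R (v.adicCompletion K)) hle
    rw [QuadraticMap.weightedSumSquares_apply, ← Finset.sum_add_sum_compl {i, j}, hcompl,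
      Finset.sum_pair hij, Finset.sum_pair hkl] at hx
    simp only [map_mul, map_pow, Algebra.smul_def] at hkd' hle' hx
    linear_combination algebraMap R (v.adicCompletion K) h * hx - hkd' * x k ^ 2 - hle' * x l ^ 2
  obtain ⟨⟨hxi, hxj⟩, hxk, hxl⟩ := eq_zero_of_quaternary_form_eq_zero Valued.v (hunit hi) (hunit hj)
    (hunit hk) (hunit hl) (one_le_valued_mul_add_sq K v hbij) (one_le_valued_mul_add_sq K v hckl)
    (by rwa [valued_adicCompletion_algebraMap]) hsum
  rw [mul_eq_zero, map_eq_zero_iff _ hinj] at hxk hxl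
  funext m
  by_cases hm : m ∈ ({i, j} : Finset ι)
  · rw [Finset.mem_insert, Finset.mem_singleton] at hm
    rcases hm with rfl | rfl <;> assumption
  · rw [← Finset.mem_compl, hcompl, Finset.mem_insert, Finset.mem_singleton] at hm
    rcases hm with rfl | rfl
    exacts [hxk.resolve_left hd, hxl.resolve_left he]

theorem anisotropic_of_isTwist_of_not_isReducedAt {f : R} (hv : v.asIdeal = Ideal.span {f})
    (hι : Fintype.card ι = 4) (hh : Squarefree h) (hfh : f ∣ h) (hb : ∀ m, Squarefree (b m))
    (hc : ∀ m, Squarefree (c m)) (hbc : IsTwist h b c) (hfb : ¬ IsReducedAt f b)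
    (hfc : ¬ IsReducedAt f c) :
    (QuadraticMap.weightedSumSquares (v.adicCompletion K) b).Anisotropic := by
  have hf0 : f ≠ 0 := fun h0 => v.ne_bot (by rw [hv, h0, Ideal.span_singleton_zero])
  have hf : Prime f := (Ideal.span_singleton_prime hf0).1 (hv ▸ v.isPrime)
  have hD := divisibleIndices_eq_compl_of_isTwist_of_dvd hf hh hb hc hbc hfh
  have hcard : (divisibleIndices f b).card + (divisibleIndices f c).card = 4 := by
    rw [hD, Finset.card_add_card_compl, hι]
  have hb2 := two_le_card_divisibleIndices_of_not_isReducedAt hfb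
  have hc2 := two_le_card_divisibleIndices_of_not_isReducedAt hfc
  have hbcard : (divisibleIndices f b).card = 2 := by omega
  have hccard : (divisibleIndices f c).card = 2 := by omega
  obtain ⟨k, l, hkl, hb_eq⟩ := Finset.card_eq_two.1 hbcard
  obtain ⟨i, j, hij, hc_eq⟩ := Finset.card_eq_two.1 hccard
  have hcompl : ({k, l} : Finset ι)ᶜ = {i, j} := by rw [← hb_eq, ← hD, hc_eq]
  have hcompl' : ({i, j} : Finset ι)ᶜ = {k, l} := by rw [← hcompl, compl_compl]
  have hb_mem (m : ι) : b m ∉ v.asIdeal ↔ m ∈ ({i, j} : Finset ι) := by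
    rw [hv, Ideal.mem_span_singleton, ← mem_divisibleIndices, hb_eq, ← Finset.mem_compl, hcompl]
  have hc_mem (m : ι) : c m ∉ v.asIdeal ↔ m ∈ ({k, l} : Finset ι) := by
    rw [hv, Ideal.mem_span_singleton, ← mem_divisibleIndices, hc_eq, ← Finset.mem_compl, hcompl']
  have hsq_span {x : R} (hsq : IsSquare (Ideal.Quotient.mk v.asIdeal x)) :
      IsSquare (Ideal.Quotient.mk (Ideal.span {f}) x) := by rwa [← hv]
  refine anisotropic_of_isTwist_of_not_isSquare K v hbc
    (not_isSquare_intValuation_of_squarefree v hv hh hfh) hij hkl hcompl'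
    ((hb_mem i).2 (by simp)) ((hb_mem j).2 (by simp)) ((hc_mem k).2 (by simp))
    ((hc_mem l).2 (by simp)) (fun hsq => hfb ⟨hbcard.le, fun _ => ?_⟩)
    (fun hsq => hfc ⟨hccard.le, fun _ => ?_⟩)
  · rw [hb_eq, hcompl, Finset.prod_pair hij]
    exact hsq_span hsq
  · rw [hc_eq, hcompl', Finset.prod_pair hkl]
    exact hsq_span hsq

end LocalAnisotropy

section FunctionField

variable {F : Type*} [Field F]

theorem finite_setOf_not_isReducedAt {ι : Type*} [Fintype ι] [DecidableEq ι] {b : ι → F[X]}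
    (hb : ∀ m, b m ≠ 0) : {f : F[X] | f.Monic ∧ Irreducible f ∧ ¬ IsReducedAt f b}.Finite := by
  classical
  refine (UniqueFactorizationMonoid.normalizedFactors (∏ m, b m)).toFinset.finite_toSet.subset ?_
  rintro f ⟨hfm, hf, hfb⟩
  rw [Finset.mem_coe, Multiset.mem_toFinset, UniqueFactorizationMonoid.mem_normalizedFactors_iff'
    (Finset.prod_ne_zero_iff.2 fun m _ => hb m)]
  exact ⟨hf, hfm.normalize_eq_self, dvd_prod_of_not_isReducedAt hfb⟩

theorem exists_squarefree_leadingCoeff_eq_dvd_iff {u : F} (hu : u ≠ 0) {S : Set F[X]}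
    (hS : S.Finite) (hmonic : ∀ f ∈ S, f.Monic) (hirr : ∀ f ∈ S, Irreducible f) :
    ∃ h : F[X], Squarefree h ∧ h.leadingCoeff = u ∧
      ∀ f : F[X], f.Monic → Irreducible f → (f ∣ h ↔ f ∈ S) := by
  lift S to Finset F[X] using hS
  have hunit : IsUnit (C u) := isUnit_C.2 hu.isUnit
  have heq_of_dvd {f g : F[X]} (hfm : f.Monic) (hf : Irreducible f) (hg : g ∈ S) (hfg : f ∣ g) :
      f = g :=
    eq_of_monic_of_associated hfm (hmonic g hg) (hf.associated_of_dvd (hirr g hg) hfg)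
  refine ⟨C u * ∏ g ∈ S, g, ?_, ?_, fun f hfm hf => ?_⟩
  · rw [(associated_unit_mul_left _ _ hunit).squarefree_iff]
    refine Finset.squarefree_prod_of_pairwise_isCoprime (fun f hf g hg hfg => ?_)
      fun f hf => (hirr f hf).squarefree
    exact ((hirr f hf).coprime_iff_not_dvd.2 fun hdvd =>
      hfg (heq_of_dvd (hmonic f hf) (hirr f hf) hg hdvd)).isRelPrime
  · rw [leadingCoeff_mul, leadingCoeff_C, (monic_prod_of_monic S (·) hmonic).leadingCoeff, mul_one]
  · rw [hunit.dvd_mul_left, hf.prime.dvd_finsetProd_iff]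
    exact ⟨fun ⟨g, hg, hfg⟩ => heq_of_dvd hfm hf hg hfg ▸ hg, fun hfS => ⟨f, hfS, dvd_rfl⟩⟩

theorem IsTwist.isSquare_leadingCoeff_iff {ι : Type*} {h : F[X]} {b c : ι → F[X]}
    (hbc : IsTwist h b c) (m : ι) :
    IsSquare (c m).leadingCoeff ↔ IsSquare (h.leadingCoeff * (b m).leadingCoeff) := by
  obtain ⟨e, he, heq⟩ := hbc m
  have hlead : (c m).leadingCoeff * e.leadingCoeff ^ 2 =
      h.leadingCoeff * (b m).leadingCoeff * 1 ^ 2 := by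
    rw [one_pow, mul_one, ← leadingCoeff_mul, heq, leadingCoeff_mul, leadingCoeff_pow]
  exact ⟨isSquare_of_mul_sq_eq_mul_sq one_ne_zero hlead.symm,
    isSquare_of_mul_sq_eq_mul_sq (leadingCoeff_ne_zero.2 he) hlead⟩

theorem isMinimized_of_isReducedAt {b : Fin 4 → F[X]} (hb : ∀ m, Squarefree (b m))
    (hred : ∀ f : F[X], f.Monic → Irreducible f → IsReducedAt f b)
    (hlead : Nat.card {m // ¬ IsSquare (b m).leadingCoeff} ≤
      Nat.card {m // IsSquare (b m).leadingCoeff}) : IsMinimized b := by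
  refine ⟨fun m => (hb m).ne_zero, hb, fun f hfm hf => ?_,
    fun f hfm hf i j k l hu hi hj hk hl => (hred f hfm hf).isSquare_mk hu hi hj hk hl, hlead⟩
  rw [← Fin.prod_univ_four]
  exact (hred f hfm hf).not_pow_three_dvd hf.prime hb

theorem exists_isTwist_isMinimized (hF : ∀ c d : F, ¬ IsSquare c → ¬ IsSquare d → IsSquare (c * d))
    {a : Fin 4 → F[X]} (ha : ∀ m, a m ≠ 0)
    (hiso : ∀ f : F[X], f.Monic → ∀ hf : Irreducible f, ¬ (QuadraticMap.weightedSumSquares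
      ((primeOfIrreducible hf).adicCompletion (RatFunc F)) a).Anisotropic) :
    ∃ (h : F[X]) (b : Fin 4 → F[X]), h ≠ 0 ∧ IsTwist h a b ∧ IsMinimized b := by
  obtain ⟨b, hb, hab⟩ := exists_squarefree_isTwist one_ne_zero ha
  obtain ⟨u, hu, hcard⟩ := exists_ne_zero_card_not_isSquare_mul_le hF fun m => (a m).leadingCoeff
  obtain ⟨h, hh, hhu, hdvd⟩ := exists_squarefree_leadingCoeff_eq_dvd_iff hu
    (finite_setOf_not_isReducedAt fun m => (hb m).ne_zero) (fun f hf => hf.1) fun f hf => hf.2.1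
  obtain ⟨c, hc, hbc⟩ := exists_squarefree_isTwist hh.ne_zero fun m => (hb m).ne_zero
  have hac : IsTwist h a c := by simpa only [mul_one] using hab.trans hbc
  refine ⟨h, c, hh.ne_zero, hac, isMinimized_of_isReducedAt hc (fun f hfm hf => ?_) ?_⟩
  · have hfh : f ∣ h ↔ ¬ IsReducedAt f b := by simp [hdvd f hfm hf, hfm, hf]
    by_cases hfb : IsReducedAt f b
    · have : (Ideal.span {f}).IsMaximal := PrincipalIdealRing.isMaximal_of_irreducible hf
      exact hfb.of_isTwist_of_not_dvd hf.prime (Fintype.card_fin 4) hh hb hc hbc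
        (mt hfh.1 (not_not.2 hfb))
    · by_contra hfc
      exact hiso f hfm hf <| hab.anisotropic <| anisotropic_of_isTwist_of_not_isReducedAt _ _ rfl
        (Fintype.card_fin 4) hh (hfh.2 hfb) hb hc hbc hfb hfc
  · simpa only [hac.isSquare_leadingCoeff_iff, hhu] using hcard

end FunctionField

theorem minimization_quaternary_general {F : Type*} [Field F]
    (hF : ∀ c d : F, ¬ IsSquare c → ¬ IsSquare d → IsSquare (c * d))
    (a : Fin 4 → F[X]) (ha : ∀ m, a m ≠ 0) :
    (∃ (f : F[X]) (_ : f.Monic) (hf : Irreducible f),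
      ∀ x : Fin 4 → (primeOfIrreducible hf).adicCompletion (RatFunc F),
        ∑ m, algebraMap F[X] ((primeOfIrreducible hf).adicCompletion (RatFunc F)) (a m)
            * x m ^ 2 = 0 → x = 0) ∨
    (∃ (b : Fin 4 → F[X]) (g : RatFunc F) (M : Matrix (Fin 4) (Fin 4) (RatFunc F)),
      IsMinimized b ∧ g ≠ 0 ∧ IsUnit M ∧
      ∀ x : Fin 4 → RatFunc F,
        g * ∑ m, algebraMap F[X] (RatFunc F) (a m) * (M.mulVec x m) ^ 2 =
          ∑ m, algebraMap F[X] (RatFunc F) (b m) * (x m) ^ 2) := by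
  refine or_iff_not_imp_left.2 fun hiso => ?_
  obtain ⟨h, b, hh, hab, hb⟩ := exists_isTwist_isMinimized hF ha fun f hfm hf haniso =>
    hiso ⟨f, hfm, hf, fun x hx => haniso x (by
      simpa only [QuadraticMap.weightedSumSquares_apply, Algebra.smul_def, ← pow_two] using hx)⟩
  obtain ⟨M, hM, heq⟩ := hab.exists_matrix (K := RatFunc F)
  exact ⟨b, algebraMap F[X] (RatFunc F) h, M, hb, RatFunc.algebraMap_ne_zero hh, hM, heq⟩

/-- every diagonal quaternary quadratic form over `𝔽[t]` with nonzero
coefficients is either anisotropic at some finite prime, or projectively equivalent to a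
minimized diagonal quadratic form. -/
theorem minimization_quaternary
    {F : Type*} [Field F] [Fintype F] (hodd : ringChar F ≠ 2)
    (a : Fin 4 → F[X]) (ha : ∀ m, a m ≠ 0) :
    (∃ (f : F[X]) (hfm : f.Monic) (hf : Irreducible f),
      ∀ x : Fin 4 → (primeOfIrreducible hf).adicCompletion (RatFunc F),
        ∑ m, algebraMap F[X] ((primeOfIrreducible hf).adicCompletion (RatFunc F)) (a m)
            * x m ^ 2 = 0 → x = 0) ∨
    (∃ (b : Fin 4 → F[X]) (g : RatFunc F) (M : Matrix (Fin 4) (Fin 4) (RatFunc F)),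
      IsMinimized b ∧ g ≠ 0 ∧ IsUnit M ∧
      ∀ x : Fin 4 → RatFunc F,
        g * ∑ m, algebraMap F[X] (RatFunc F) (a m) * (M.mulVec x m) ^ 2 =
          ∑ m, algebraMap F[X] (RatFunc F) (b m) * (x m) ^ 2) :=
  minimization_quaternary_general (fun _ _ => isSquare_mul_of_not_isSquare) a ha
end

section
/- Let a₁x₁² + a₂x₂² + a₃x₃² + a₄x₄² be a minimized diagonal quadratic form with coefficients in 𝔽[t] which is isotropic over 𝔽_q(t), and suppose that aᵢx² + aⱼy² is anisotropic over 𝔽_q(t) for every pair of indices i ≠ j. Let D = a₁a₂a₃a₄. Then there exist a permutation σ of {1,2,3,4}, an ε ∈ {0,1}, and a polynomial b ∈ 𝔽[t] coprime to D, such that for every monic irreducible a ∈ 𝔽[t] with a ≡ b (mod D) and deg(a) ≡ ε (mod 2), both of the following equations have solutions over 𝔽_q(t): a_{σ(1)}x² + a_{σ(2)}y² = P·a and −a_{σ(3)}z² − a_{σ(4)}w² = P·a, where P is the product of the monic gcd of a_{σ(1)} and a_{σ(2)} with the monic gcd of a_{σ(3)} and a_{σ(4)}. -/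
open Polynomial

/-- `g` is the monic greatest common divisor of `p` and `q`. -/
def IsMonicGcd {F : Type*} [Field F] (p q g : F[X]) : Prop :=
  g.Monic ∧ g ∣ p ∧ g ∣ q ∧ ∀ r : F[X], r ∣ p → r ∣ q → r ∣ g

/-!
Split the form into two binary halves `a_{σ(1)} x² + a_{σ(2)} y²` and `-a_{σ(3)} z² - a_{σ(4)} w²`
and look for a common value `P p`, with `p` prime. After removing the gcd of its two coefficients, a
half represents `P p` if and only if a ternary form with squarefree, pairwise coprime coefficients
is isotropic. By Legendre's theorem over `𝔽_q[t]`, proved by counting dimensions, that is a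
local question. At the primes dividing `D` it is settled by the residue class of `p` modulo `D`,
which exists because the form is minimized; at `p` itself it follows from quadratic reciprocity
provided that it holds at infinity; and at infinity only the parity of `deg p` matters. If three of
the degrees `deg aᵢ` have the same parity, the majority of square leading coefficients makes a
suitable permutation available; otherwise the degrees have parities `2 + 2`, and comparing the terms
of highest degree in an isotropic vector shows that one half is hyperbolic at infinity.
-/

/-- `m` is a square in the residue ring `R ⧸ (f)`. -/
def IsSquareMod {R : Type*} [CommRing R] (f m : R) : Prop :=
  IsSquare (Ideal.Quotient.mk (Ideal.span {f}) m)

namespace IsSquareMod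

section CommRing

variable {R : Type*} [CommRing R] {f g m : R}

theorem iff_exists_dvd_sq_sub : IsSquareMod f m ↔ ∃ r, f ∣ r ^ 2 - m := by
  constructor
  · rintro ⟨y, hy⟩
    obtain ⟨r, rfl⟩ := Ideal.Quotient.mk_surjective y
    refine ⟨r, Ideal.mem_span_singleton.mp (Ideal.Quotient.eq.mp ?_)⟩
    rw [hy, map_pow, sq]
  · rintro ⟨r, hr⟩
    refine ⟨Ideal.Quotient.mk _ r, ?_⟩
    rw [← map_mul, ← sq, eq_comm, Ideal.Quotient.eq]
    exact Ideal.mem_span_singleton.mpr hr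

theorem of_dvd (h : IsSquareMod f m) (hgf : g ∣ f) : IsSquareMod g m := by
  obtain ⟨r, hr⟩ := iff_exists_dvd_sq_sub.mp h
  exact iff_exists_dvd_sq_sub.mpr ⟨r, hgf.trans hr⟩

theorem mul_congr_right {c p : R} (hpc : f ∣ p - c) (h : IsSquareMod f (m * c)) :
    IsSquareMod f (m * p) := by
  have hmk : Ideal.Quotient.mk (Ideal.span {f}) p = Ideal.Quotient.mk _ c :=
    Ideal.Quotient.eq.mpr (Ideal.mem_span_singleton.mpr hpc)
  rwa [IsSquareMod, map_mul, hmk, ← map_mul]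

theorem mul_of_isCoprime (hfg : IsCoprime f g) (hf : IsSquareMod f m) (hg : IsSquareMod g m) :
    IsSquareMod (f * g) m := by
  obtain ⟨r, hr⟩ := iff_exists_dvd_sq_sub.mp hf
  obtain ⟨s, hs⟩ := iff_exists_dvd_sq_sub.mp hg
  obtain ⟨u, v, huv⟩ := id hfg
  set x := r * (v * g) + s * (u * f) with hx
  have hxr : f ∣ x - r := ⟨u * (s - r), by linear_combination hx + r * huv⟩
  have hxs : g ∣ x - s := ⟨v * (r - s), by linear_combination hx + s * huv⟩
  refine iff_exists_dvd_sq_sub.mpr ⟨x, hfg.mul_dvd ?_ ?_⟩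
  · rw [show x ^ 2 - m = (x - r) * (x + r) + (r ^ 2 - m) by ring]
    exact dvd_add (hxr.mul_right _) hr
  · rw [show x ^ 2 - m = (x - s) * (x + s) + (s ^ 2 - m) by ring]
    exact dvd_add (hxs.mul_right _) hs

theorem of_sq_mul (hfg : IsCoprime f g) (h : IsSquareMod f (g ^ 2 * m)) : IsSquareMod f m := by
  have hg : IsUnit (Ideal.Quotient.mk (Ideal.span {f}) g) := by
    obtain ⟨u, v, huv⟩ := hfg
    refine IsUnit.of_mul_eq_one (Ideal.Quotient.mk _ v) ?_
    rw [← map_mul, ← map_one (Ideal.Quotient.mk _), Ideal.Quotient.eq, Ideal.mem_span_singleton]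
    exact ⟨-u, by linear_combination huv⟩
  obtain ⟨w, hw⟩ := hg
  have hsq := (IsSquare.sq (↑w⁻¹ : R ⧸ Ideal.span {f})).mul h
  rwa [map_mul, map_pow, ← hw, ← mul_assoc, ← mul_pow, Units.inv_mul, one_pow, one_mul] at hsq

end CommRing

variable {K : Type*} [Field K]

theorem of_forall_monic_irreducible {f m : K[X]} (hf : Squarefree f)
    (h : ∀ g : K[X], g.Monic → Irreducible g → g ∣ f → IsSquareMod g m) : IsSquareMod f m := by
  classical
  induction f using UniqueFactorizationMonoid.induction_on_prime with
  | h₁ => exact absurd rfl hf.ne_zero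
  | h₂ x hx => exact iff_exists_dvd_sq_sub.mpr ⟨0, hx.dvd⟩
  | h₃ a p _ hp ih =>
    obtain ⟨hpa, -, hsa⟩ := squarefree_mul_iff.mp hf
    have hpm : IsSquareMod p m :=
      (h (normalize p) (monic_normalize hp.ne_zero)
        ((normalize_associated p).irreducible_iff.mpr hp.irreducible)
        (normalize_dvd_iff.mpr (dvd_mul_right p a))).of_dvd (dvd_normalize_iff.mpr dvd_rfl)
    have ham : IsSquareMod a m :=
      ih hsa fun g hg hi hga => h g hg hi (hga.mul_left p)
    exact hpm.mul_of_isCoprime hpa.isCoprime ham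

end IsSquareMod

theorem resultant_eq_of_dvd_sub {R : Type*} [CommRing R] {f g₁ g₂ : R[X]} (hf : f.Monic)
    (h : f ∣ g₁ - g₂) : resultant f g₁ = resultant f g₂ := by
  have resultant_of_le (g : R[X]) (n : ℕ) (hn : g.natDegree ≤ n) :
      resultant f g f.natDegree n = resultant f g := by
    obtain ⟨k, rfl⟩ := Nat.exists_eq_add_of_le hn
    rw [resultant_add_right_deg _ _ _ _ _ le_rfl, coeff_natDegree, hf.leadingCoeff, one_pow,
      one_mul]
  obtain ⟨k, hk⟩ := h
  set n := g₁.natDegree + g₂.natDegree + k.natDegree + f.natDegree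
  rw [← resultant_of_le g₁ n (by omega), ← resultant_of_le g₂ n (by omega),
    eq_add_of_sub_eq' hk, resultant_add_mul_right _ _ _ _ _ (by omega) le_rfl]

theorem resultant_mul_right_of_ne_zero {R : Type*} [CommRing R] [IsDomain R] (f : R[X])
    {g₁ g₂ : R[X]} (h₁ : g₁ ≠ 0) (h₂ : g₂ ≠ 0) :
    resultant f (g₁ * g₂) = resultant f g₁ * resultant f g₂ := by
  rw [natDegree_mul h₁ h₂, resultant_mul_right _ _ _ _ le_rfl]

theorem IsSquareMod.isSquare_resultant {R : Type*} [CommRing R] [IsDomain R] {f m : R[X]}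
    (hf : f.Monic) (h : IsSquareMod f m) : IsSquare (resultant f m) := by
  obtain ⟨r, hr⟩ := iff_exists_dvd_sq_sub.mp h
  rw [← resultant_eq_of_dvd_sub hf hr]
  rcases eq_or_ne r 0 with rfl | hr0
  · rcases Nat.eq_zero_or_pos f.natDegree with hd | hd
    · simp [hf.natDegree_eq_zero.mp hd]
    · simp [hd.ne']
  · rw [sq, resultant_mul_right_of_ne_zero f hr0 hr0]
    exact IsSquare.mul_self _

theorem norm_mk_eq_resultant {K : Type*} [Field K] [PerfectField K] {f : K[X]} (hf : f.Monic)
    [Fact (Irreducible f)] (g : K[X]) :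
    Algebra.norm K (AdjoinRoot.mk f g) = resultant f g := by
  classical
  have hi : Irreducible f := Fact.out
  let pb := AdjoinRoot.powerBasis hi.ne_zero
  have hmin : minpoly K pb.gen = f := by
    simpa [pb, hf.leadingCoeff] using AdjoinRoot.minpoly_root hi.ne_zero
  have : FiniteDimensional K (AdjoinRoot f) := pb.finite
  let E := AlgebraicClosure K
  let φ := algebraMap K E
  have hnodup : (f.map φ).roots.Nodup :=
    nodup_roots (PerfectField.separable_of_irreducible hi).map
  apply φ.injective
  calc φ (Algebra.norm K (AdjoinRoot.mk f g))
      = ∏ σ : AdjoinRoot f →ₐ[K] E, σ (AdjoinRoot.mk f g) := Algebra.norm_eq_prod_embeddings _ _ _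
    _ = ∏ x : {x // x ∈ (minpoly K pb.gen).aroots E}, (g.map φ).eval x.1 := by
      refine Fintype.prod_equiv pb.liftEquiv' _ _ fun σ => ?_
      rw [PowerBasis.liftEquiv'_apply_coe, eval_map_algebraMap, ← AdjoinRoot.aeval_eq,
        ← aeval_algHom_apply]
      rfl
    _ = ((f.map φ).roots.map (g.map φ).eval).prod := by
      rw [Finset.prod_mem_multiset _ _ (fun x => (g.map φ).eval x) fun _ => rfl,
        Finset.prod_eq_multiset_prod, Multiset.toFinset_val, hmin,
        Multiset.dedup_eq_self.mpr hnodup]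
    _ = φ (resultant f g) := by
      rw [← resultant_map_map, ← hf.natDegree_map φ,
        resultant_eq_prod_eval _ _ _ natDegree_map_le (IsAlgClosed.splits _),
        (hf.map φ).leadingCoeff, one_pow, one_mul]

theorem isSquare_of_isSquare_norm {F L : Type*} [Field F] [Field L] [Algebra F L] [Finite L]
    {x : L} (h : IsSquare (Algebra.norm F x)) : IsSquare x := by
  have := Finite.of_injective _ (algebraMap F L).injective
  have := Fintype.ofFinite F
  have := Fintype.ofFinite L
  rcases eq_or_ne x 0 with rfl | hx
  · exact IsSquare.zero
  by_cases hL : ringChar L = 2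
  · exact FiniteField.isSquare_of_char_two hL x
  have hF : ringChar F ≠ 2 := by rwa [Algebra.ringChar_eq F L]
  obtain ⟨u, hu⟩ := Nat.odd_iff.mpr (FiniteField.odd_card_of_char_ne_two hF)
  obtain ⟨k, hk⟩ : Fintype.card F - 1 ∣ Fintype.card L - 1 := by
    rw [Module.card_eq_pow_finrank (K := F) (V := L)]
    simpa using Nat.sub_dvd_pow_sub_pow (Fintype.card F) 1 (Module.finrank F L)
  have hFcard := Fintype.one_lt_card (α := F)
  have hLcard : Fintype.card L / 2 = k * u := by
    have := Fintype.card_pos (α := L)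
    rw [hu, Nat.add_sub_cancel, mul_assoc, mul_comm u k] at hk
    omega
  rw [FiniteField.isSquare_iff hF (Algebra.norm_ne_zero_iff.mpr hx)] at h
  rw [FiniteField.isSquare_iff hL hx]
  calc x ^ (Fintype.card L / 2)
      = (x ^ ((Nat.card L - 1) / (Nat.card F - 1))) ^ (Fintype.card F / 2) := by
        rw [Nat.card_eq_fintype_card, Nat.card_eq_fintype_card, hk,
          Nat.mul_div_cancel_left k (by omega), ← pow_mul, hLcard, hu]
        congr 2
        omega
    _ = algebraMap F L (Algebra.norm F x ^ (Fintype.card F / 2)) := by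
        rw [map_pow, FiniteField.algebraMap_norm_eq_pow]
    _ = 1 := by rw [h, map_one]

theorem isSquareMod_iff_isSquare_resultant {F : Type*} [Field F] [Finite F] {f m : F[X]}
    (hf : f.Monic) (hi : Irreducible f) :
    IsSquareMod f m ↔ IsSquare (resultant f m) := by
  refine ⟨IsSquareMod.isSquare_resultant hf, fun h => ?_⟩
  have := Fact.mk hi
  have : FiniteDimensional F (AdjoinRoot f) := (AdjoinRoot.powerBasis hi.ne_zero).finite
  have : Finite (AdjoinRoot f) := Module.finite_of_finite F
  rw [← norm_mk_eq_resultant hf] at h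
  exact isSquare_of_isSquare_norm h

theorem even_add_of_modEq_two {m n : ℕ} (h : m ≡ n [MOD 2]) : Even (m + n) := by
  rw [Nat.even_add, Nat.even_iff, Nat.even_iff, h]

/-- For `α, β ≠ 0` and `s ≡ a + n`, `t ≡ b + n` modulo 2 this says that
`α T ^ a x ^ 2 + β T ^ b y ^ 2 = T ^ n z ^ 2` has a nontrivial solution over the Laurent series in
`T⁻¹`, i.e. that the Hilbert symbol at infinity of `α T ^ s` and `β T ^ t` is trivial. -/
def IsSolvableAtInfty {K : Type*} [Field K] (α β : K) (s t : ℕ) : Prop :=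
  IsSquare ((-1) ^ (s * t) * α ^ t * β ^ s)

namespace IsSolvableAtInfty

variable {K : Type*} [Field K] {α β : K} {s t s' t' : ℕ}

theorem congr (hα : α ≠ 0) (hβ : β ≠ 0) (hs : s ≡ s' [MOD 2]) (ht : t ≡ t' [MOD 2])
    (h : IsSolvableAtInfty α β s t) : IsSolvableAtInfty α β s' t' := by
  have hprod : IsSquare (((-1) ^ (s * t) * α ^ t * β ^ s) *
      ((-1) ^ (s' * t') * α ^ t' * β ^ s')) := by
    rw [show ((-1) ^ (s * t) * α ^ t * β ^ s) * ((-1) ^ (s' * t') * α ^ t' * β ^ s') =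
      (-1) ^ (s * t + s' * t') * α ^ (t + t') * β ^ (s + s') by ring]
    exact (((even_add_of_modEq_two (hs.mul ht)).isSquare_pow _).mul
      ((even_add_of_modEq_two ht).isSquare_pow _)).mul ((even_add_of_modEq_two hs).isSquare_pow _)
  have hne : (-1) ^ (s * t) * α ^ t * β ^ s ≠ 0 :=
    mul_ne_zero (mul_ne_zero (pow_ne_zero _ (neg_ne_zero.mpr one_ne_zero)) (pow_ne_zero _ hα))
      (pow_ne_zero _ hβ)
  have := hprod.div h
  rwa [mul_div_cancel_left₀ _ hne] at this

theorem of_isSquare_left (hα : IsSquare α) (hs : Even s) : IsSolvableAtInfty α β s t :=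
  (((hs.mul_right t).isSquare_pow _).mul (hα.pow t)).mul (hs.isSquare_pow β)

theorem of_even (hs : Even s) (ht : Even t) : IsSolvableAtInfty α β s t :=
  (((hs.mul_right t).isSquare_pow _).mul (ht.isSquare_pow α)).mul (hs.isSquare_pow β)

theorem of_isSquare_neg_mul (hα : α ≠ 0) (hβ : β ≠ 0) (h : IsSquare (-(α * β)))
    (hst : s ≡ t [MOD 2]) : IsSolvableAtInfty α β s t := by
  rcases Nat.even_or_odd s with hs | hs
  · exact of_even hs (Nat.even_iff.mpr (Eq.trans hst.symm (Nat.even_iff.mp hs)))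
  · have h₁ : IsSolvableAtInfty α β 1 1 := by
      simpa [IsSolvableAtInfty] using h
    have hs1 : s ≡ 1 [MOD 2] := Nat.odd_iff.mp hs
    exact h₁.congr hα hβ hs1.symm (hs1.symm.trans hst)

end IsSolvableAtInfty

theorem neg_one_pow_eq_mul_neg_one_pow {R : Type*} [CommRing R] (a b n : ℕ) :
    (-1 : R) ^ n =
      (-1) ^ ((a + n) * (b + n)) * (-1) ^ (a * n) * (-1) ^ (b * a) * (-1) ^ (b * n) := by
  rw [← pow_add, ← pow_add, ← pow_add]
  apply neg_one_pow_congr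
  by_cases ha : Even a <;> by_cases hb : Even b <;> by_cases hn : Even n <;>
    simp [Nat.even_add, Nat.even_mul, ha, hb, hn]

theorem resultant_neg_mul_mul_sq {K : Type*} [Field K] {A B N : K[X]} (hA : A.Monic) (hB : B.Monic)
    (hN : N.Monic) {α β : K} (hα : α ≠ 0) (hβ : β ≠ 0) :
    resultant N (-(C α * A * (C β * B))) *
        (α ^ B.natDegree * β ^ A.natDegree * resultant A B) ^ 2 =
      (-1) ^ ((A.natDegree + N.natDegree) * (B.natDegree + N.natDegree)) *
        α ^ (B.natDegree + N.natDegree) * β ^ (A.natDegree + N.natDegree) *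
        (resultant A (C β * B * N) * resultant B (C α * A * N)) := by
  have hCα : (C α : K[X]) ≠ 0 := C_ne_zero.mpr hα
  have hCβ : (C β : K[X]) ≠ 0 := C_ne_zero.mpr hβ
  have hNres : resultant N (-(C α * A * (C β * B))) =
      (-1) ^ N.natDegree * α ^ N.natDegree * β ^ N.natDegree *
        (resultant N A * resultant N B) := by
    rw [show -(C α * A * (C β * B)) = C (-(α * β)) * (A * B) by
        rw [C_neg, C_mul]; ring,
      resultant_mul_right_of_ne_zero N (C_ne_zero.mpr (neg_ne_zero.mpr (mul_ne_zero hα hβ)))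
        (mul_ne_zero hA.ne_zero hB.ne_zero),
      resultant_mul_right_of_ne_zero N hA.ne_zero hB.ne_zero, natDegree_C, resultant_C_zero_right]
    ring
  have hAres : resultant A (C β * B * N) =
      β ^ A.natDegree * resultant A B *
        ((-1) ^ (A.natDegree * N.natDegree) * resultant N A) := by
    rw [resultant_mul_right_of_ne_zero A (mul_ne_zero hCβ hB.ne_zero) hN.ne_zero,
      resultant_mul_right_of_ne_zero A hCβ hB.ne_zero, natDegree_C, resultant_C_zero_right,
      resultant_comm A N]
  have hBres : resultant B (C α * A * N) =
      α ^ B.natDegree * ((-1) ^ (B.natDegree * A.natDegree) * resultant A B) *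
        ((-1) ^ (B.natDegree * N.natDegree) * resultant N B) := by
    rw [resultant_mul_right_of_ne_zero B (mul_ne_zero hCα hA.ne_zero) hN.ne_zero,
      resultant_mul_right_of_ne_zero B hCα hA.ne_zero, natDegree_C, resultant_C_zero_right,
      resultant_comm B N, resultant_comm B A]
  rw [hNres, hAres, hBres, neg_one_pow_eq_mul_neg_one_pow A.natDegree B.natDegree]
  ring

theorem isSquare_resultant_neg_mul {K : Type*} [Field K] {A B N : K[X]} (hA : A.Monic)
    (hB : B.Monic) (hN : N.Monic) (hAB : IsCoprime A B) {α β : K} (hα : α ≠ 0) (hβ : β ≠ 0)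
    (hAsq : IsSquareMod A (C β * B * N)) (hBsq : IsSquareMod B (C α * A * N))
    (hinf : IsSolvableAtInfty α β (A.natDegree + N.natDegree) (B.natDegree + N.natDegree)) :
    IsSquare (resultant N (-(C α * A * (C β * B)))) := by
  set c := α ^ B.natDegree * β ^ A.natDegree * resultant A B
  have hc : c ≠ 0 := mul_ne_zero (mul_ne_zero (pow_ne_zero _ hα) (pow_ne_zero _ hβ))
    (resultant_ne_zero A B hAB)
  have hsq : IsSquare (resultant N (-(C α * A * (C β * B))) * c ^ 2) := by
    rw [resultant_neg_mul_mul_sq hA hB hN hα hβ]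
    exact hinf.mul ((hAsq.isSquare_resultant hA).mul (hBsq.isSquare_resultant hB))
  simpa [hc] using hsq.div (IsSquare.sq c)

theorem exists_monic_eq_C_leadingCoeff_mul {K : Type*} [Field K] {P : K[X]} (hP : P ≠ 0) :
    ∃ Q : K[X], Q.Monic ∧ Q.natDegree = P.natDegree ∧ P = C P.leadingCoeff * Q := by
  refine ⟨P * C P.leadingCoeff⁻¹, monic_mul_leadingCoeff_inv hP,
    natDegree_mul_leadingCoeff_inv P hP, ?_⟩
  rw [mul_left_comm, ← C_mul, mul_inv_cancel₀ (leadingCoeff_ne_zero.mpr hP), C_1, mul_one]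

/-- Quadratic reciprocity: if `A x ^ 2 + B y ^ 2 = h p z ^ 2` is locally solvable at infinity and at
all primes but `p`, then it is also locally solvable at `p`. -/
theorem isSquareMod_neg_mul_of_irreducible {F : Type*} [Field F] [Finite F] {A B h p : F[X]}
    (hA : A ≠ 0) (hB : B ≠ 0) (hh : h.Monic) (hp : p.Monic) (hpi : Irreducible p)
    (hAB : IsCoprime A B) (hhAB : IsCoprime h (A * B))
    (hAsq : IsSquareMod A (B * (h * p))) (hBsq : IsSquareMod B (A * (h * p)))
    (hhsq : IsSquareMod h (-(A * B)))
    (hinf : IsSolvableAtInfty A.leadingCoeff B.leadingCoeff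
      (A.natDegree + (h * p).natDegree) (B.natDegree + (h * p).natDegree)) :
    IsSquareMod p (-(A * B)) := by
  obtain ⟨A', hA', hAdeg, hAeq⟩ := exists_monic_eq_C_leadingCoeff_mul hA
  obtain ⟨B', hB', hBdeg, hBeq⟩ := exists_monic_eq_C_leadingCoeff_mul hB
  have hA'A : A' ∣ A := Dvd.intro_left _ hAeq.symm
  have hB'B : B' ∣ B := Dvd.intro_left _ hBeq.symm
  have hmul : IsSquare (resultant (h * p) (-(A * B))) := by
    rw [← hAdeg, ← hBdeg] at hinf
    have hA'sq := hAsq.of_dvd hA'A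
    have hB'sq := hBsq.of_dvd hB'B
    rw [hAeq] at hB'sq
    rw [hBeq] at hA'sq
    rw [hAeq, hBeq]
    exact isSquare_resultant_neg_mul hA' hB' (hh.mul hp)
      ((hAB.of_isCoprime_of_dvd_left hA'A).of_isCoprime_of_dvd_right hB'B)
      (leadingCoeff_ne_zero.mpr hA) (leadingCoeff_ne_zero.mpr hB) hA'sq hB'sq hinf
  rw [natDegree_mul hh.ne_zero hp.ne_zero, resultant_mul_left _ _ _ _ le_rfl] at hmul
  have hne : resultant h (-(A * B)) ≠ 0 := resultant_ne_zero _ _ hhAB.neg_right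
  have hdiv := hmul.div (hhsq.isSquare_resultant hh)
  rw [mul_div_cancel_left₀ _ hne] at hdiv
  exact (isSquareMod_iff_isSquare_resultant hp hpi).mpr hdiv

theorem exists_ne_zero_mem_degreeLT_map_eq_zero {K ι W : Type*} [Field K] [Fintype ι]
    [AddCommGroup W] [Module K W] [FiniteDimensional K W] (L : (ι → K[X]) →ₗ[K] W) {d : ι → ℕ}
    (hd : Module.finrank K W < ∑ i, d i) :
    ∃ v : ι → K[X], v ≠ 0 ∧ (∀ i, v i ∈ degreeLT K (d i)) ∧ L v = 0 := by
  have hfin (i : ι) : FiniteDimensional K (degreeLT K (d i)) :=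
    (degreeLTEquiv K (d i)).symm.finiteDimensional
  have hrank : Module.finrank K (∀ i, degreeLT K (d i)) = ∑ i, d i := by
    rw [Module.finrank_pi_fintype]
    exact Finset.sum_congr rfl fun i _ => by rw [(degreeLTEquiv K (d i)).finrank_eq]; simp
  let incl : (∀ i, degreeLT K (d i)) →ₗ[K] ι → K[X] :=
    LinearMap.pi fun i => (degreeLT K (d i)).subtype ∘ₗ LinearMap.proj i
  obtain ⟨v, hv, hv0⟩ := Submodule.exists_mem_ne_zero_of_ne_bot
    (LinearMap.ker_ne_bot_of_finrank_lt (f := L ∘ₗ incl) (hrank ▸ hd))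
  refine ⟨incl v, fun h => hv0 (funext fun i => Subtype.ext (congrFun h i)), fun i => (v i).2, hv⟩

theorem exists_ne_zero_prod_dvd_sum_mul_sq {K W : Type*} [Field K] [AddCommGroup W] [Module K W]
    [FiniteDimensional K W] {a : Fin 3 → K[X]} (ha : ∀ i, a i ≠ 0)
    (hcop : Pairwise (Function.onFun IsCoprime a))
    (hsq : ∀ i, IsSquareMod (a i) (-(a (i + 1) * a (i + 2)))) (T : (Fin 3 → K[X]) →ₗ[K] W)
    {d : Fin 3 → ℕ} (hd : ∑ i, (a i).natDegree + Module.finrank K W < ∑ i, d i) :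
    ∃ v : Fin 3 → K[X], v ≠ 0 ∧ (∀ i, v i ∈ degreeLT K (d i)) ∧ T v = 0 ∧
      ∏ i, a i ∣ ∑ i, a i * v i ^ 2 := by
  choose r hr using fun i => IsSquareMod.iff_exists_dvd_sq_sub.mp (hsq i)
  have hfin (i : Fin 3) : FiniteDimensional K (K[X] ⧸ Ideal.span {a i}) :=
    (AdjoinRoot.powerBasis (ha i)).finite
  let L : (Fin 3 → K[X]) →ₗ[K] ∀ i, K[X] ⧸ Ideal.span {a i} := LinearMap.pi fun i =>
    (Ideal.Quotient.mkₐ K (Ideal.span {a i})).toLinearMap ∘ₗ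
      (LinearMap.mulLeft K (a (i + 1)) ∘ₗ LinearMap.proj (i + 1) -
        LinearMap.mulLeft K (r i) ∘ₗ LinearMap.proj (i + 2))
  have hrank : Module.finrank K ((∀ i, K[X] ⧸ Ideal.span {a i}) × W) < ∑ i, d i := by
    simpa [Module.finrank_pi_fintype, finrank_quotient_span_eq_natDegree] using hd
  obtain ⟨v, hv0, hvd, hv⟩ := exists_ne_zero_mem_degreeLT_map_eq_zero (L.prod T) hrank
  have hLT := Prod.mk.inj hv
  refine ⟨v, hv0, hvd, hLT.2,
    Finset.prod_dvd_of_coprime (fun i _ j _ hij => hcop hij) fun i _ => ?_⟩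
  have hlin : a i ∣ a (i + 1) * v (i + 1) - r i * v (i + 2) :=
    Ideal.mem_span_singleton.mp (Ideal.Quotient.eq_zero_iff_mem.mp (congrFun hLT.1 i))
  have hcop' : IsCoprime (a i) (a (i + 1)) := hcop (by fin_cases i <;> decide)
  have hdvd : a i ∣ a (i + 1) * (a (i + 1) * v (i + 1) ^ 2 + a (i + 2) * v (i + 2) ^ 2) := by
    rw [show a (i + 1) * (a (i + 1) * v (i + 1) ^ 2 + a (i + 2) * v (i + 2) ^ 2) =
      (a (i + 1) * v (i + 1) - r i * v (i + 2)) * (a (i + 1) * v (i + 1) + r i * v (i + 2)) +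
        (r i ^ 2 - -(a (i + 1) * a (i + 2))) * v (i + 2) ^ 2 by ring]
    exact dvd_add (hlin.mul_right _) ((hr i).mul_right _)
  have hsum : ∑ j, a j * v j ^ 2 =
      a i * v i ^ 2 + (a (i + 1) * v (i + 1) ^ 2 + a (i + 2) * v (i + 2) ^ 2) := by
    fin_cases i <;> simp [Fin.sum_univ_three] <;> ring
  rw [hsum]
  exact dvd_add (dvd_mul_right _ _) (hcop'.dvd_of_dvd_mul_left hdvd)

theorem exists_mul_sq_add_mul_sq_eq {F : Type*} [Field F] [Finite F] {c₀ c₁ : F} (h₀ : c₀ ≠ 0)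
    (h₁ : c₁ ≠ 0) (c : F) : ∃ x y : F, c₀ * x ^ 2 + c₁ * y ^ 2 = c := by
  have := Fintype.ofFinite F
  by_cases hF : ringChar F = 2
  · obtain ⟨x, hx⟩ := FiniteField.isSquare_of_char_two hF (c / c₀)
    exact ⟨x, 0, by rw [sq x, ← hx, mul_div_cancel₀ c h₀]; ring⟩
  · obtain ⟨x, y, hxy⟩ := FiniteField.exists_root_sum_quadratic
      (f := C c₀ * X ^ 2 + C 0 * X + C (-c)) (g := C c₁ * X ^ 2 + C 0 * X + C 0)
      (degree_quadratic h₀) (degree_quadratic h₁) (FiniteField.odd_card_of_char_ne_two hF)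
    simp only [eval_add, eval_mul, eval_C, eval_pow, eval_X] at hxy
    exact ⟨x, y, by linear_combination hxy⟩

theorem degree_mul_sq_lt {K : Type*} [Field K] {a v : K[X]} {d n : ℕ} (hv : v ∈ degreeLT K d)
    (h : a.natDegree + 2 * d ≤ n + 1) : (a * v ^ 2).degree < n := by
  rcases eq_or_ne v 0 with rfl | hv0
  · simp
  · have hvd : v.natDegree < d := (natDegree_lt_iff_degree_lt hv0).mpr (mem_degreeLT.mp hv)
    have hav : (a * v ^ 2).natDegree ≤ a.natDegree + 2 * v.natDegree :=
      natDegree_mul_le.trans (by rw [natDegree_pow])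
    refine degree_le_natDegree.trans_lt (Nat.cast_lt.mpr ?_)
    omega

theorem coeff_mul_sq {K : Type*} [Field K] (a : K[X]) {v : K[X]} {k : ℕ} (hv : v.natDegree ≤ k) :
    (a * v ^ 2).coeff (a.natDegree + 2 * k) = a.leadingCoeff * v.coeff k ^ 2 := by
  rw [coeff_mul_add_eq_of_natDegree_le le_rfl (natDegree_pow_le_of_le 2 hv),
    coeff_pow_of_natDegree_le hv, coeff_natDegree]

section Legendre

variable {K : Type*} [Field K] {a : Fin 3 → K[X]}

theorem exists_sum_mul_sq_eq_zero_of_parity_ne (ha : ∀ i, a i ≠ 0)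
    (hcop : Pairwise (Function.onFun IsCoprime a))
    (hsq : ∀ i, IsSquareMod (a i) (-(a (i + 1) * a (i + 2)))) {j : Fin 3}
    (hj : (a j).natDegree % 2 ≠ (∑ i, (a i).natDegree) % 2) :
    ∃ v : Fin 3 → K[X], v ≠ 0 ∧ ∑ i, a i * v i ^ 2 = 0 := by
  set n := ∑ i, (a i).natDegree with hn
  have hn3 : n = (a 0).natDegree + (a 1).natDegree + (a 2).natDegree := Fin.sum_univ_three _
  have hrank : n + Module.finrank K PUnit < ∑ i, (n - (a i).natDegree + 1) / 2 := by
    rw [Module.finrank_zero_of_subsingleton, Fin.sum_univ_three]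
    fin_cases j <;> simp only [Fin.zero_eta, Fin.mk_one, Fin.reduceFinMk] at hj <;> omega
  obtain ⟨v, hv0, hvd, -, hdvd⟩ :=
    exists_ne_zero_prod_dvd_sum_mul_sq ha hcop hsq (0 : _ →ₗ[K] PUnit) hrank
  refine ⟨v, hv0, eq_zero_of_dvd_of_degree_lt hdvd ?_⟩
  rw [degree_eq_natDegree (Finset.prod_ne_zero_iff.mpr fun i _ => ha i),
    natDegree_prod _ _ fun i _ => ha i, ← hn]
  refine (degree_sum_le _ _).trans_lt ((Finset.sup_lt_iff (WithBot.bot_lt_coe n)).mpr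
    fun i _ => degree_mul_sq_lt (n := n) (hvd i) ?_)
  have hle : (a i).natDegree ≤ n :=
    Finset.single_le_sum (f := fun i => (a i).natDegree) (fun _ _ => Nat.zero_le _)
      (Finset.mem_univ i)
  omega

theorem exists_sum_mul_sq_eq_zero_of_leadingCoeff (ha : ∀ i, a i ≠ 0)
    (hcop : Pairwise (Function.onFun IsCoprime a))
    (hsq : ∀ i, IsSquareMod (a i) (-(a (i + 1) * a (i + 2)))) {k : Fin 3 → ℕ}
    (hk : ∀ i, (a i).natDegree + 2 * k i = ∑ j, (a j).natDegree) {c : Fin 3 → K} (hc : c ≠ 0)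
    (hlc : ∑ i, (a i).leadingCoeff * c i ^ 2 = 0) :
    ∃ v : Fin 3 → K[X], v ≠ 0 ∧ ∑ i, a i * v i ^ 2 = 0 := by
  set n := ∑ i, (a i).natDegree with hn
  let top : (Fin 3 → K[X]) →ₗ[K] Fin 3 → K :=
    LinearMap.pi fun i => lcoeff K (k i) ∘ₗ LinearMap.proj i
  have hrank : n + Module.finrank K ((Fin 3 → K) ⧸ K ∙ c) < ∑ i, (k i + 1) := by
    have hquot := Submodule.finrank_quotient_add_finrank (K ∙ c)
    rw [finrank_span_singleton hc, Module.finrank_fin_fun] at hquot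
    have h0 := hk 0
    have h1 := hk 1
    have h2 := hk 2
    rw [Fin.sum_univ_three] at hn ⊢
    omega
  obtain ⟨v, hv0, hvd, htop, hdvd⟩ :=
    exists_ne_zero_prod_dvd_sum_mul_sq ha hcop hsq ((K ∙ c).mkQ ∘ₗ top) hrank
  obtain ⟨s, hs⟩ := Submodule.mem_span_singleton.mp ((Submodule.Quotient.mk_eq_zero _).mp htop)
  have hcoeff (i : Fin 3) : (v i).coeff (k i) = s * c i := (congrFun hs i).symm
  have hvk (i : Fin 3) : (v i).natDegree ≤ k i := by
    rcases eq_or_ne (v i) 0 with h | h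
    · simp [h]
    · exact Nat.lt_succ_iff.mp ((natDegree_lt_iff_degree_lt h).mpr (mem_degreeLT.mp (hvd i)))
  refine ⟨v, hv0, eq_zero_of_dvd_of_degree_lt hdvd ?_⟩
  rw [degree_eq_natDegree (Finset.prod_ne_zero_iff.mpr fun i _ => ha i),
    natDegree_prod _ _ fun i _ => ha i, ← hn, degree_lt_iff_coeff_zero]
  intro m hm
  rw [finsetSum_coeff]
  rcases hm.eq_or_lt with rfl | hm
  · calc ∑ i, (a i * v i ^ 2).coeff n = ∑ i, s ^ 2 * ((a i).leadingCoeff * c i ^ 2) :=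
          Finset.sum_congr rfl fun i _ => by rw [← hk i, coeff_mul_sq _ (hvk i), hcoeff i]; ring
      _ = 0 := by rw [← Finset.mul_sum, hlc, mul_zero]
  · refine Finset.sum_eq_zero fun i _ => coeff_eq_zero_of_degree_lt
      ((degree_mul_sq_lt (hvd i) ?_).trans_le (Nat.cast_le.mpr hm))
    have := hk i
    omega

/-- Legendre's theorem on ternary quadratic forms, with `𝔽[t]` in place of `ℤ`. -/
theorem exists_sum_mul_sq_eq_zero_of_isSquareMod [Finite K] (ha : ∀ i, a i ≠ 0)
    (hcop : Pairwise (Function.onFun IsCoprime a))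
    (hsq : ∀ i, IsSquareMod (a i) (-(a (i + 1) * a (i + 2)))) :
    ∃ v : Fin 3 → K[X], v ≠ 0 ∧ ∑ i, a i * v i ^ 2 = 0 := by
  by_cases hpar : ∃ j, (a j).natDegree % 2 ≠ (∑ i, (a i).natDegree) % 2
  · obtain ⟨j, hj⟩ := hpar
    exact exists_sum_mul_sq_eq_zero_of_parity_ne ha hcop hsq hj
  push Not at hpar
  have hlc (i : Fin 3) : (a i).leadingCoeff ≠ 0 := leadingCoeff_ne_zero.mpr (ha i)
  obtain ⟨x, y, hxy⟩ := exists_mul_sq_add_mul_sq_eq (hlc 0) (hlc 1) (-(a 2).leadingCoeff)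
  refine exists_sum_mul_sq_eq_zero_of_leadingCoeff ha hcop hsq
    (k := fun i => (∑ j, (a j).natDegree - (a i).natDegree) / 2) (fun i => ?_) (c := ![x, y, 1])
    (fun h => one_ne_zero (congrFun h 2)) ?_
  · have := hpar i
    have := Finset.single_le_sum (f := fun j => (a j).natDegree) (fun _ _ => Nat.zero_le _)
      (Finset.mem_univ i)
    omega
  · simp only [Fin.sum_univ_three, Matrix.cons_val]
    linear_combination hxy

end Legendre

theorem exists_mul_sq_add_mul_sq_eq_of_isotropic {K : Type*} [Field K] (h2 : (2 : K) ≠ 0)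
    {a b n : K} (ha : a ≠ 0) (hb : b ≠ 0) {x y z : K} (hne : x ≠ 0 ∨ y ≠ 0 ∨ z ≠ 0)
    (h : a * x ^ 2 + b * y ^ 2 = n * z ^ 2) : ∃ u v : K, a * u ^ 2 + b * v ^ 2 = n := by
  rcases eq_or_ne z 0 with rfl | hz
  · -- The binary form is a hyperbolic plane, hence universal.
    have hx : x ≠ 0 := by rintro rfl; simp_all
    refine ⟨(n / a + 1) / 2, y / x * ((n / a - 1) / 2), ?_⟩
    field_simp
    linear_combination (n - a) ^ 2 * h
  · refine ⟨x / z, y / z, ?_⟩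
    field_simp
    rw [h, mul_comm]

theorem exists_mul_sq_add_mul_sq_eq_algebraMap {F : Type*} [Field F] [Finite F]
    (hF : ringChar F ≠ 2) {A B h p : F[X]}
    (hA : A ≠ 0) (hB : B ≠ 0) (hh : h.Monic) (hp : p.Monic) (hpi : Irreducible p)
    (hAB : IsCoprime A B) (hhAB : IsCoprime h (A * B)) (hpAB : IsCoprime p (A * B))
    (hhp : IsCoprime h p)
    (hAsq : IsSquareMod A (B * (h * p))) (hBsq : IsSquareMod B (A * (h * p)))
    (hhsq : IsSquareMod h (-(A * B)))
    (hinf : IsSolvableAtInfty A.leadingCoeff B.leadingCoeff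
      (A.natDegree + (h * p).natDegree) (B.natDegree + (h * p).natDegree)) :
    ∃ x y : RatFunc F, algebraMap F[X] (RatFunc F) A * x ^ 2 +
      algebraMap F[X] (RatFunc F) B * y ^ 2 = algebraMap F[X] (RatFunc F) (h * p) := by
  have hpsq := isSquareMod_neg_mul_of_irreducible hA hB hh hp hpi hAB hhAB hAsq hBsq hhsq hinf
  have hNsq : IsSquareMod (-(h * p)) (-(A * B)) :=
    (hhsq.mul_of_isCoprime hhp hpsq).of_dvd (neg_dvd.mpr dvd_rfl)
  have hN0 : -(h * p) ≠ 0 := neg_ne_zero.mpr (hh.mul hp).ne_zero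
  have hN : IsCoprime (-(h * p)) (A * B) := (hhAB.mul_left hpAB).neg_left
  have hNA := hN.of_mul_right_left
  have hNB := hN.of_mul_right_right
  obtain ⟨v, hv0, hv⟩ := exists_sum_mul_sq_eq_zero_of_isSquareMod (a := ![A, B, -(h * p)])
    (by intro i; fin_cases i <;> assumption)
    (by
      intro i j hij
      fin_cases i <;> fin_cases j <;>
        first | exact absurd rfl hij | assumption | exact IsCoprime.symm (by assumption))
    (by
      intro i
      fin_cases i
      · simpa using hAsq
      · simpa [mul_comm] using hBsq
      · exact hNsq)
  let φ := algebraMap F[X] (RatFunc F)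
  have hφ : Function.Injective φ := RatFunc.algebraMap_injective F
  have hφ0 {u : F[X]} : φ u ≠ 0 ↔ u ≠ 0 := map_ne_zero_iff φ hφ
  have h2 : (2 : F[X]) ≠ 0 := C_ne_zero.mpr (Ring.two_ne_zero hF)
  refine exists_mul_sq_add_mul_sq_eq_of_isotropic (x := φ (v 0)) (y := φ (v 1)) (z := φ (v 2))
    (map_ofNat φ 2 ▸ hφ0.mpr h2) (hφ0.mpr hA) (hφ0.mpr hB) ?_ ?_
  · rw [hφ0, hφ0, hφ0]
    by_contra! h0
    exact hv0 (funext fun i => by fin_cases i <;> simp [h0])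
  · simp only [Fin.sum_univ_three, Matrix.cons_val] at hv
    rw [← map_pow, ← map_pow, ← map_pow, ← map_mul, ← map_mul, ← map_mul, ← map_add]
    exact congrArg φ (by linear_combination hv)

theorem isCoprime_of_forall_monic_irreducible {K : Type*} [Field K] {p q : K[X]} (hp : p ≠ 0)
    (h : ∀ f : K[X], f.Monic → Irreducible f → f ∣ p → ¬ f ∣ q) : IsCoprime p q := by
  classical
  refine isCoprime_of_prime_dvd (fun h0 => hp h0.1) fun f hf hfp hfq => ?_
  exact h (normalize f) (monic_normalize hf.ne_zero)
    ((normalize_associated f).irreducible_iff.mpr hf.irreducible)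
    (normalize_dvd_iff.mpr hfp) (normalize_dvd_iff.mpr hfq)

theorem exists_forall_monic_irreducible_dvd_sub {K : Type*} [Field K] {D : K[X]} (hD : D ≠ 0)
    (r : K[X] → K[X]) :
    ∃ b : K[X], ∀ f : K[X], f.Monic → Irreducible f → f ∣ D → f ∣ b - r f := by
  classical
  let s : Finset K[X] := (UniqueFactorizationMonoid.normalizedFactors D).toFinset
  have hs (f : K[X]) (hf : f ∈ s) : f.Monic ∧ Irreducible f := by
    have hf' := Multiset.mem_toFinset.mp hf
    have hi := UniqueFactorizationMonoid.irreducible_of_normalized_factor f hf'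
    rw [← UniqueFactorizationMonoid.normalize_normalized_factor f hf']
    exact ⟨monic_normalize hi.ne_zero, (normalize_associated f).irreducible_iff.mpr hi⟩
  obtain ⟨b, hb⟩ := IsDedekindDomain.exists_forall_sub_mem_ideal (s := s)
    (fun f => Ideal.span {f}) (fun _ => 1)
    (fun f hf => Ideal.prime_span_singleton_iff.mpr (hs f hf).2.prime)
    (fun f hf g hg hne heq => hne (eq_of_monic_of_associated (hs f hf).1 (hs g hg).1
      (Ideal.span_singleton_eq_span_singleton.mp heq)))
    (fun f => r f.1)
  refine ⟨b, fun f hf hi hfD => ?_⟩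
  have hfs : f ∈ s := by
    rw [Multiset.mem_toFinset, UniqueFactorizationMonoid.mem_normalizedFactors_iff' hD]
    exact ⟨hi, hf.normalize_eq_self, hfD⟩
  simpa only [pow_one, Ideal.mem_span_singleton] using hb f hfs

theorem exists_isMonicGcd {K : Type*} [Field K] {u : Fin 2 → K[X]} (hu : ∀ i, u i ≠ 0) :
    ∃ (g : K[X]) (A : Fin 2 → K[X]), IsMonicGcd (u 0) (u 1) g ∧ (∀ i, u i = g * A i) ∧
      ∀ i, IsCoprime (A i) (A (i + 1)) := by
  classical
  obtain ⟨A₀, A₁, h₀, h₁, hunit⟩ := extract_gcd (u 0) (u 1)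
  have hcop : IsCoprime A₀ A₁ := (gcd_isUnit_iff _ _).mp hunit
  refine ⟨gcd (u 0) (u 1), ![A₀, A₁], ⟨?_, gcd_dvd_left _ _, gcd_dvd_right _ _,
    fun r => dvd_gcd⟩, fun i => ?_, fun i => ?_⟩
  · rw [← normalize_gcd]
    exact monic_normalize fun h => hu 0 ((gcd_eq_zero_iff _ _).mp h).1
  · fin_cases i
    exacts [h₀, h₁]
  · fin_cases i
    exacts [hcop, hcop.symm]

theorem IsMonicGcd.of_neg {K : Type*} [Field K] {p q g : K[X]} (h : IsMonicGcd (-p) (-q) g) :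
    IsMonicGcd p q g := by
  simpa only [IsMonicGcd, dvd_neg] using h

/-- The diagonal binary forms with coefficients `w 0` and `w 1` are the halves of a splitting
`w 0 ⟂ -w 1` of a quaternary form which satisfies the conditions on primes in `IsMinimized`. The
half complementary to `s : Fin 2` is `s + 1`, and likewise for coefficients. -/
structure IsMinimizedSplitting {K : Type*} [Field K] (w : Fin 2 → Fin 2 → K[X]) : Prop where
  squarefree (s i : Fin 2) : Squarefree (w s i)
  not_dvd {f : K[X]} (hf : f.Monic) (hi : Irreducible f) (s j : Fin 2) (h : ∀ i, f ∣ w s i) :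
    ¬ f ∣ w (s + 1) j
  isSquareMod_neg_mul {f : K[X]} (hf : f.Monic) (hi : Irreducible f) (s : Fin 2)
    (h : ∀ i, f ∣ w (s + 1) i) : IsSquareMod f (-(w s 0 * w s 1))
  isSquareMod_mul {f : K[X]} (hf : f.Monic) (hi : Irreducible f) (s i j : Fin 2)
    (hs : f ∣ w s i) (hs' : f ∣ w (s + 1) j) : IsSquareMod f (w s (i + 1) * w (s + 1) (j + 1))

namespace IsMinimizedSplitting

section

variable {K : Type*} [Field K] {w A : Fin 2 → Fin 2 → K[X]} {g : Fin 2 → K[X]}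

theorem isCoprime_gcd (hw : IsMinimizedSplitting w) (hwA : ∀ s i, w s i = g s * A s i)
    (s i : Fin 2) : IsCoprime (g (s + 1)) (w s i) := by
  refine isCoprime_of_forall_monic_irreducible ?_ fun f hf hi hfg => ?_
  · have := (hw.squarefree (s + 1) 0).ne_zero
    rw [hwA] at this
    exact left_ne_zero_of_mul this
  · have := hw.not_dvd hf hi (s + 1) i fun j => hwA (s + 1) j ▸ hfg.mul_right _
    rwa [show s + 1 + 1 = s by omega] at this

theorem isSquareMod_gcd (hw : IsMinimizedSplitting w) (hwA : ∀ s i, w s i = g s * A s i)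
    (s : Fin 2) : IsSquareMod (g (s + 1)) (-(A s 0 * A s 1)) := by
  have hg : Squarefree (g (s + 1)) :=
    (hw.squarefree (s + 1) 0).squarefree_of_dvd (hwA (s + 1) 0 ▸ dvd_mul_right _ _)
  refine IsSquareMod.of_forall_monic_irreducible hg fun f hf hi hfg => ?_
  have hcop : IsCoprime f (g s) :=
    ((hw.isCoprime_gcd hwA s 0).of_isCoprime_of_dvd_left hfg).of_isCoprime_of_dvd_right
      (hwA s 0 ▸ dvd_mul_right _ _)
  refine IsSquareMod.of_sq_mul hcop ?_
  have := hw.isSquareMod_neg_mul hf hi s fun i => hwA (s + 1) i ▸ hfg.mul_right _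
  rw [hwA, hwA] at this
  convert this using 1
  ring

theorem exists_local_residue (hw : IsMinimizedSplitting w) (hwA : ∀ s i, w s i = g s * A s i)
    (hA : ∀ s i, IsCoprime (A s i) (A s (i + 1))) {f : K[X]} (hf : f.Monic)
    (hi : Irreducible f) :
    ∃ r, ¬ f ∣ r ∧ ∀ s i, f ∣ A s i → IsSquareMod f (A s (i + 1) * g (s + 1) * r) := by
  by_cases h : ∃ s i, f ∣ A s i
  · obtain ⟨s, i, hfA⟩ := h
    have hfw : f ∣ w s i := hwA s i ▸ hfA.mul_left _
    have hfA' : ¬ f ∣ A s (i + 1) := fun h => hi.not_isUnit ((hA s i).isUnit_of_dvd' hfA h)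
    have hfg : ¬ f ∣ g (s + 1) :=
      fun h => hi.not_isUnit ((hw.isCoprime_gcd hwA s i).isUnit_of_dvd' h hfw)
    refine ⟨A s (i + 1) * g (s + 1), hi.prime.not_dvd_mul hfA' hfg, fun s' j hfj => ?_⟩
    obtain rfl | rfl : s' = s ∨ s' = s + 1 := by omega
    · obtain rfl | rfl : j = i ∨ j = i + 1 := by omega
      · exact (IsSquare.mul_self _).map _
      · exact absurd hfj hfA'
    · have := hw.isSquareMod_mul hf hi s i j hfw (hwA (s + 1) j ▸ hfj.mul_left _)
      rw [hwA, hwA] at this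
      rw [show s + 1 + 1 = s by omega]
      convert this using 1
      ring
  · push Not at h
    exact ⟨1, fun h1 => hi.not_isUnit (isUnit_of_dvd_one h1), fun s i hfA => absurd hfA (h s i)⟩

theorem exists_residue_class (hw : IsMinimizedSplitting w) (hwA : ∀ s i, w s i = g s * A s i)
    (hA : ∀ s i, IsCoprime (A s i) (A s (i + 1))) {D : K[X]} (hD : D ≠ 0)
    (hwD : ∀ s i, w s i ∣ D) :
    ∃ b, IsCoprime b D ∧ ∀ p, D ∣ p - b →
      ∀ s i, IsSquareMod (A s i) (A s (i + 1) * g (s + 1) * p) := by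
  choose! r hr hrsq using fun (f : K[X]) (hf : f.Monic ∧ Irreducible f) =>
    hw.exists_local_residue hwA hA hf.1 hf.2
  obtain ⟨b, hb⟩ := exists_forall_monic_irreducible_dvd_sub hD r
  refine ⟨b, IsCoprime.symm (isCoprime_of_forall_monic_irreducible hD fun f hf hi hfD hfb => ?_),
    fun p hp s i => ?_⟩
  · exact hr f ⟨hf, hi⟩ ((dvd_sub_right hfb).mp (hb f hf hi hfD))
  · have hAw : A s i ∣ w s i := hwA s i ▸ dvd_mul_left _ _
    refine IsSquareMod.of_forall_monic_irreducible ((hw.squarefree s i).squarefree_of_dvd hAw)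
      fun f hf hi hfA => ?_
    have hfD : f ∣ D := hfA.trans (hAw.trans (hwD s i))
    refine IsSquareMod.mul_congr_right ?_ (hrsq f ⟨hf, hi⟩ s i hfA)
    rw [← sub_add_sub_cancel p b]
    exact dvd_add (hfD.trans hp) (hb f hf hi hfD)

end

theorem exists_mul_sq_add_mul_sq_eq {F : Type*} [Field F] [Finite F] (hF : ringChar F ≠ 2)
    {w A : Fin 2 → Fin 2 → F[X]} {g : Fin 2 → F[X]}
    (hw : IsMinimizedSplitting w) (hwA : ∀ s i, w s i = g s * A s i)
    (hA : ∀ s i, IsCoprime (A s i) (A s (i + 1))) (hg : ∀ s, (g s).Monic) (s : Fin 2) {p : F[X]}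
    (hp : p.Monic) (hpi : Irreducible p) (hpw : ∀ s i, IsCoprime p (w s i))
    (hsq : ∀ i, IsSquareMod (A s i) (A s (i + 1) * g (s + 1) * p))
    (hinf : IsSolvableAtInfty (w s 0).leadingCoeff (w s 1).leadingCoeff
      ((A s 0).natDegree + (g (s + 1) * p).natDegree)
      ((A s 1).natDegree + (g (s + 1) * p).natDegree)) :
    ∃ x y : RatFunc F, algebraMap F[X] (RatFunc F) (w s 0) * x ^ 2 +
      algebraMap F[X] (RatFunc F) (w s 1) * y ^ 2 =
        algebraMap F[X] (RatFunc F) (g s * g (s + 1) * p) := by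
  have hgw := hw.isCoprime_gcd hwA s
  have hA0 (i : Fin 2) : A s i ≠ 0 := right_ne_zero_of_mul (hwA s i ▸ (hw.squarefree s i).ne_zero)
  have hAw (i : Fin 2) : A s i ∣ w s i := hwA s i ▸ dvd_mul_left _ _
  have hlc (i : Fin 2) : (w s i).leadingCoeff = (A s i).leadingCoeff := by
    rw [hwA, leadingCoeff_mul, (hg s).leadingCoeff, one_mul]
  have hcop {q : F[X]} (hq : ∀ i, IsCoprime q (w s i)) : IsCoprime q (A s 0 * A s 1) :=
    ((hq 0).of_isCoprime_of_dvd_right (hAw 0)).mul_right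
      ((hq 1).of_isCoprime_of_dvd_right (hAw 1))
  rw [hlc, hlc] at hinf
  obtain ⟨x, y, hxy⟩ := exists_mul_sq_add_mul_sq_eq_algebraMap hF (hA0 0) (hA0 1) (hg (s + 1))
    hp hpi (hA s 0) (hcop hgw) (hcop (hpw s))
    ((hpw (s + 1) 0).of_isCoprime_of_dvd_right (hwA (s + 1) 0 ▸ dvd_mul_right _ _)).symm
    (by simpa [mul_assoc] using hsq 0) (by simpa [mul_assoc] using hsq 1)
    (hw.isSquareMod_gcd hwA s) hinf
  refine ⟨x, y, ?_⟩
  rw [hwA, hwA, mul_assoc, map_mul, map_mul, map_mul _ (g s) (g (s + 1) * p), ← hxy]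
  ring

end IsMinimizedSplitting

namespace IsMinimized

variable {K : Type*} [Field K] {a : Fin 4 → K[X]} {f : K[X]}

theorem comp_perm (ha : IsMinimized a) (σ : Equiv.Perm (Fin 4)) : IsMinimized (a ∘ σ) := by
  obtain ⟨h0, hsq, hcube, hres, hcard⟩ := ha
  refine ⟨fun m => h0 (σ m), fun m => hsq (σ m), fun f hf hi => ?_, fun f hf hi i j k l h => ?_, ?_⟩
  · have hprod := Equiv.prod_comp σ a
    rw [Fin.prod_univ_four, Fin.prod_univ_four] at hprod
    simp only [Function.comp_apply, hprod]
    exact hcube f hf hi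
  · refine hres f hf hi (σ i) (σ j) (σ k) (σ l) ?_
    simpa only [Finset.image_insert, Finset.image_singleton, Finset.image_univ_equiv] using
      congrArg (Finset.image σ) h
  · have e (P : K[X] → Prop) : Nat.card {m // P ((a ∘ σ) m)} = Nat.card {m // P (a m)} :=
      Nat.card_congr (σ.subtypeEquiv fun _ => Iff.rfl)
    rwa [e fun u => IsSquare u.leadingCoeff, e fun u => ¬ IsSquare u.leadingCoeff]

theorem not_dvd (ha : IsMinimized a) (hf : f.Monic) (hi : Irreducible f) {i j k : Fin 4}
    (hij : i ≠ j) (hik : i ≠ k) (hjk : j ≠ k) (hai : f ∣ a i) (haj : f ∣ a j) : ¬ f ∣ a k := by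
  intro hak
  refine ha.2.2.1 f hf hi ?_
  calc f ^ 3 = ∏ _m ∈ {i, j, k}, f := by
        rw [Finset.prod_const, Finset.card_eq_three.mpr ⟨i, j, k, hij, hik, hjk, rfl⟩]
    _ ∣ ∏ m ∈ {i, j, k}, a m := Finset.prod_dvd_prod_of_dvd _ _ (by simp [hai, haj, hak])
    _ ∣ ∏ m, a m := Finset.prod_dvd_prod_of_subset _ _ _ (Finset.subset_univ _)
    _ = a 0 * a 1 * a 2 * a 3 := Fin.prod_univ_four a

theorem isSquareMod_neg_mul (ha : IsMinimized a) (hf : f.Monic) (hi : Irreducible f)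
    {i j k l : Fin 4} (h : ({i, j, k, l} : Finset (Fin 4)) = Finset.univ) (hk : f ∣ a k)
    (hl : f ∣ a l) : IsSquareMod f (-(a i * a j)) := by
  obtain ⟨hik, hil, hjk, hjl, hkl⟩ : i ≠ k ∧ i ≠ l ∧ j ≠ k ∧ j ≠ l ∧ k ≠ l := by
    clear hk hl
    decide +revert
  exact ha.2.2.2.1 f hf hi i j k l h (ha.not_dvd hf hi hkl hik.symm hil.symm hk hl)
    (ha.not_dvd hf hi hkl hjk.symm hjl.symm hk hl) hk hl

theorem isMinimizedSplitting (ha : IsMinimized a) :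
    IsMinimizedSplitting ![![a 0, a 1], ![-a 2, -a 3]] := by
  let e : Fin 2 → Fin 2 → Fin 4 := ![![0, 1], ![2, 3]]
  let w : Fin 2 → Fin 2 → K[X] := ![![a 0, a 1], ![-a 2, -a 3]]
  have hne (s j : Fin 2) : e s 0 ≠ e s 1 ∧ e s 0 ≠ e (s + 1) j ∧ e s 1 ≠ e (s + 1) j := by
    clear w
    decide +revert
  have huniv (s : Fin 2) :
      ({e s 0, e s 1, e (s + 1) 0, e (s + 1) 1} : Finset (Fin 4)) = Finset.univ := by
    clear w
    decide +revert
  have huniv' (s i j : Fin 2) :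
      ({e s (i + 1), e (s + 1) (j + 1), e s i, e (s + 1) j} : Finset (Fin 4)) = Finset.univ := by
    clear w
    decide +revert
  have hw (s i : Fin 2) : Associated (w s i) (a (e s i)) := by
    fin_cases s <;> fin_cases i
    exacts [.refl _, .refl _, (Associated.refl _).neg_left, (Associated.refl _).neg_left]
  have hmul (s : Fin 2) : w s 0 * w s 1 = a (e s 0) * a (e s 1) := by
    fin_cases s
    exacts [rfl, neg_mul_neg _ _]
  have hmul' (s i j : Fin 2) : w s i * w (s + 1) j = -(a (e s i) * a (e (s + 1) j)) := by
    fin_cases s <;> fin_cases i <;> fin_cases j <;> simp [w, e]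
  refine ⟨fun s i => ?_, fun hf hi s j h => ?_, fun hf hi s h => ?_, fun hf hi s i j hs hs' => ?_⟩
  · exact (hw s i).squarefree_iff.mpr (ha.2.1 _)
  · rw [(hw _ _).dvd_iff_dvd_right]
    exact ha.not_dvd hf hi (hne s j).1 (hne s j).2.1 (hne s j).2.2
      ((hw s 0).dvd_iff_dvd_right.mp (h 0)) ((hw s 1).dvd_iff_dvd_right.mp (h 1))
  · rw [hmul s]
    exact ha.isSquareMod_neg_mul hf hi (huniv s)
      ((hw _ 0).dvd_iff_dvd_right.mp (h 0)) ((hw _ 1).dvd_iff_dvd_right.mp (h 1))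
  · rw [hmul']
    exact ha.isSquareMod_neg_mul hf hi (huniv' s i j)
      ((hw _ _).dvd_iff_dvd_right.mp hs) ((hw _ _).dvd_iff_dvd_right.mp hs')

end IsMinimized

theorem exists_polynomial_sum_mul_sq_eq_zero {K ι : Type*} [Field K] [Fintype ι] {a : ι → K[X]}
    {x : ι → RatFunc K} (hx : x ≠ 0)
    (h : ∑ i, algebraMap K[X] (RatFunc K) (a i) * x i ^ 2 = 0) :
    ∃ y : ι → K[X], y ≠ 0 ∧ ∑ i, a i * y i ^ 2 = 0 := by
  have hinj := RatFunc.algebraMap_injective K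
  obtain ⟨d, hd⟩ := IsLocalization.exist_integer_multiples_of_finite (nonZeroDivisors K[X]) x
  choose y hy using hd
  have hd0 : algebraMap K[X] (RatFunc K) d ≠ 0 :=
    (map_ne_zero_iff _ hinj).mpr (nonZeroDivisors.coe_ne_zero d)
  have hyx (i : ι) : algebraMap K[X] (RatFunc K) (y i) = algebraMap K[X] (RatFunc K) d * x i := by
    rw [hy, Algebra.smul_def]
  refine ⟨y, ?_, hinj ?_⟩
  · obtain ⟨i, hi⟩ := Function.ne_iff.mp hx
    refine Function.ne_iff.mpr ⟨i, (map_ne_zero_iff _ hinj).mp ?_⟩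
    rw [hyx]
    exact mul_ne_zero hd0 hi
  · calc algebraMap K[X] (RatFunc K) (∑ i, a i * y i ^ 2)
        = algebraMap K[X] (RatFunc K) d ^ 2 *
            ∑ i, algebraMap K[X] (RatFunc K) (a i) * x i ^ 2 := by
          simp only [map_sum, map_mul, map_pow, hyx, mul_pow, Finset.mul_sum, mul_left_comm]
      _ = algebraMap K[X] (RatFunc K) 0 := by rw [h, mul_zero, map_zero]

theorem exists_sum_leadingCoeff_mul_sq_eq_zero {R ι : Type*} [CommRing R] [IsDomain R] [Fintype ι]
    {a y : ι → R[X]} (ha : ∀ i, a i ≠ 0) (hy : y ≠ 0) (h : ∑ i, a i * y i ^ 2 = 0) :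
    ∃ (e : ℕ) (c : ι → R), c ≠ 0 ∧ (∀ i, c i ≠ 0 → (a i).natDegree ≡ e [MOD 2]) ∧
      ∑ i, (a i).leadingCoeff * c i ^ 2 = 0 := by
  classical
  obtain ⟨j, hj, hmax⟩ := (Finset.univ.filter fun i => y i ≠ 0).exists_max_image
    (fun i => (a i).natDegree + 2 * (y i).natDegree)
    (by simpa [Finset.filter_nonempty_iff] using Function.ne_iff.mp hy)
  simp only [Finset.mem_filter_univ] at hj hmax
  set e := (a j).natDegree + 2 * (y j).natDegree
  let c (i : ι) : R := if (a i).natDegree + 2 * (y i).natDegree = e then (y i).leadingCoeff else 0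
  have hcoeff (i : ι) : (a i).leadingCoeff * c i ^ 2 = (a i * y i ^ 2).coeff e := by
    by_cases hyi : y i = 0
    · simp [c, hyi]
    have hdeg : (a i * y i ^ 2).natDegree = (a i).natDegree + 2 * (y i).natDegree := by
      rw [natDegree_mul (ha i) (pow_ne_zero 2 hyi), natDegree_pow]
    by_cases hi : (a i).natDegree + 2 * (y i).natDegree = e
    · rw [← hi, ← hdeg, coeff_natDegree, leadingCoeff_mul, leadingCoeff_pow]
      simp only [c, if_pos hi]
    · rw [coeff_eq_zero_of_natDegree_lt (by rw [hdeg]; exact lt_of_le_of_ne (hmax i hyi) hi)]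
      simp only [c, if_neg hi, ne_eq, OfNat.ofNat_ne_zero, not_false_eq_true, zero_pow, mul_zero]
  refine ⟨e, c, Function.ne_iff.mpr ⟨j, ?_⟩, fun i hi => ?_, ?_⟩
  · simpa [c, e] using hj
  · have hie : (a i).natDegree + 2 * (y i).natDegree = e := by
      by_contra hne
      exact hi (if_neg hne)
    rw [← hie]
    exact (Nat.add_mul_mod_self_left _ _ _).symm
  · rw [Finset.sum_congr rfl fun i _ => hcoeff i, ← finsetSum_coeff, h, coeff_zero]

theorem isSquare_neg_mul_of_isotropic {K : Type*} [Field K] {α β x y : K} (hxy : x ≠ 0 ∨ y ≠ 0)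
    (h : α * x ^ 2 + β * y ^ 2 = 0) : IsSquare (-(α * β)) := by
  rcases hxy with hx | hy
  · refine ⟨β * y / x, ?_⟩
    field_simp
    linear_combination -β * h
  · refine ⟨α * x / y, ?_⟩
    field_simp
    linear_combination -α * h

theorem exists_ne_of_card_not_le_card {ι : Type*} [Finite ι] {P : ι → Prop} (hι : 3 ≤ Nat.card ι)
    (h : Nat.card {i // ¬ P i} ≤ Nat.card {i // P i}) (m : ι) : ∃ i ≠ m, P i := by
  classical
  have hsum : Nat.card {i // P i} + Nat.card {i // ¬ P i} = Nat.card ι := by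
    rw [← Nat.card_sum, Nat.card_congr (Equiv.sumCompl P)]
  by_contra! hne
  have hsub : Subsingleton {i // P i} := ⟨fun i j => Subtype.ext <|
    (not_imp_not.mp (hne i) i.2).trans (not_imp_not.mp (hne j) j.2).symm⟩
  have hle := Finite.card_le_one_iff_subsingleton.mpr hsub
  omega

theorem exists_forall_ne_eq_or_exists_perm (c : Fin 4 → ZMod 2) :
    (∃ m, ∀ i j, i ≠ m → j ≠ m → c i = c j) ∨
      ∃ σ : Equiv.Perm (Fin 4), c (σ 0) = c (σ 1) ∧ c (σ 2) = c (σ 3) ∧ c (σ 0) ≠ c (σ 2) := by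
  suffices h : (∃ m, ∀ i j, i ≠ m → j ≠ m → c i = c j) ∨
      ∃ k, c (Equiv.swap 1 k 0) = c (Equiv.swap 1 k 1) ∧
        c (Equiv.swap 1 k 2) = c (Equiv.swap 1 k 3) ∧
        c (Equiv.swap 1 k 0) ≠ c (Equiv.swap 1 k 2) from
    h.imp_right fun ⟨k, hk⟩ => ⟨Equiv.swap 1 k, hk⟩
  decide +revert

section

variable {K : Type*} [Field K] {a : Fin 4 → K[X]}

theorem isSquare_neg_mul_or_of_natDegree (ha : ∀ i, a i ≠ 0) {x : Fin 4 → RatFunc K} (hx : x ≠ 0)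
    (h : ∑ i, algebraMap K[X] (RatFunc K) (a i) * x i ^ 2 = 0) {σ : Equiv.Perm (Fin 4)}
    (h₀₁ : (a (σ 0)).natDegree ≡ (a (σ 1)).natDegree [MOD 2])
    (h₂₃ : (a (σ 2)).natDegree ≡ (a (σ 3)).natDegree [MOD 2])
    (h₀₂ : ¬ (a (σ 0)).natDegree ≡ (a (σ 2)).natDegree [MOD 2]) :
    IsSquare (-((a (σ 0)).leadingCoeff * (a (σ 1)).leadingCoeff)) ∨
      IsSquare (-((a (σ 2)).leadingCoeff * (a (σ 3)).leadingCoeff)) := by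
  obtain ⟨y, hy, hay⟩ := exists_polynomial_sum_mul_sq_eq_zero hx h
  obtain ⟨e, c, hc, hce, hsum⟩ := exists_sum_leadingCoeff_mul_sq_eq_zero ha hy hay
  rw [← Equiv.sum_comp σ, Fin.sum_univ_four] at hsum
  have hcσ : (c (σ 0) ≠ 0 ∨ c (σ 1) ≠ 0) ∨ (c (σ 2) ≠ 0 ∨ c (σ 3) ≠ 0) := by
    obtain ⟨m, hm⟩ := Function.ne_iff.mp hc
    obtain ⟨i, rfl⟩ := σ.surjective m
    fin_cases i
    exacts [.inl (.inl hm), .inl (.inr hm), .inr (.inl hm), .inr (.inr hm)]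
  have hzero (i : Fin 4) (hi : ¬ (a i).natDegree ≡ e [MOD 2]) : c i = 0 :=
    not_not.mp fun h => hi (hce i h)
  by_cases he : (a (σ 0)).natDegree ≡ e [MOD 2]
  · have h₂ : c (σ 2) = 0 := hzero _ fun h => h₀₂ (he.trans h.symm)
    have h₃ : c (σ 3) = 0 := hzero _ fun h => h₀₂ (he.trans (h₂₃.trans h).symm)
    exact .inl (isSquare_neg_mul_of_isotropic (by simpa [h₂, h₃] using hcσ)
      (by simpa [h₂, h₃] using hsum))
  · have h₀ : c (σ 0) = 0 := hzero _ he
    have h₁ : c (σ 1) = 0 := hzero _ fun h => he (h₀₁.trans h)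
    exact .inr (isSquare_neg_mul_of_isotropic (by simpa [h₀, h₁] using hcσ)
      (by simpa [h₀, h₁] using hsum))

theorem exists_perm_isSolvableAtInfty (ha : ∀ i, a i ≠ 0)
    (hcard : Nat.card {m // ¬ IsSquare (a m).leadingCoeff} ≤
      Nat.card {m // IsSquare (a m).leadingCoeff})
    {x : Fin 4 → RatFunc K} (hx : x ≠ 0)
    (h : ∑ i, algebraMap K[X] (RatFunc K) (a i) * x i ^ 2 = 0) :
    ∃ (σ : Equiv.Perm (Fin 4)) (e : ℕ),
      IsSolvableAtInfty (a (σ 0)).leadingCoeff (a (σ 1)).leadingCoeff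
        ((a (σ 0)).natDegree + e) ((a (σ 1)).natDegree + e) ∧
      IsSolvableAtInfty (-a (σ 2)).leadingCoeff (-a (σ 3)).leadingCoeff
        ((-a (σ 2)).natDegree + e) ((-a (σ 3)).natDegree + e) := by
  simp only [leadingCoeff_neg, natDegree_neg]
  have hlc (i : Fin 4) : (a i).leadingCoeff ≠ 0 := leadingCoeff_ne_zero.mpr (ha i)
  rcases exists_forall_ne_eq_or_exists_perm fun i => ((a i).natDegree : ZMod 2) with
    ⟨m, hm⟩ | ⟨σ, h₀₁, h₂₃, h₀₂⟩
  · obtain ⟨i, him, hsq⟩ := exists_ne_of_card_not_le_card (by simp) hcard m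
    obtain ⟨σ, rfl, rfl⟩ : ∃ σ : Equiv.Perm (Fin 4), σ 0 = i ∧ σ 1 = m :=
      MulAction.is_two_pretransitive_iff.mp (Equiv.Perm.isMultiplyPretransitive _ 2)
        zero_ne_one him
    simp only [ZMod.natCast_eq_natCast_iff] at hm
    have hσ (j : Fin 4) (hj : j ≠ 1) : Even ((a (σ j)).natDegree + (a (σ 0)).natDegree) :=
      even_add_of_modEq_two (hm _ _ (σ.injective.ne hj) him)
    exact ⟨σ, (a (σ 0)).natDegree, .of_isSquare_left hsq (hσ 0 (by decide)),
      .of_even (hσ 2 (by decide)) (hσ 3 (by decide))⟩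
  · rw [ZMod.natCast_eq_natCast_iff] at h₀₁ h₂₃
    rw [Ne, ZMod.natCast_eq_natCast_iff] at h₀₂
    rcases isSquare_neg_mul_or_of_natDegree ha hx h h₀₁ h₂₃ h₀₂ with hsq | hsq
    · exact ⟨σ, (a (σ 2)).natDegree,
        .of_isSquare_neg_mul (hlc _) (hlc _) hsq (h₀₁.add_right _),
        .of_even (even_add_of_modEq_two rfl) (even_add_of_modEq_two h₂₃.symm)⟩
    · exact ⟨σ, (a (σ 0)).natDegree,
        .of_even (even_add_of_modEq_two rfl) (even_add_of_modEq_two h₀₁.symm),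
        .of_isSquare_neg_mul (neg_ne_zero.mpr (hlc _)) (neg_ne_zero.mpr (hlc _))
          (by rwa [neg_mul_neg]) (h₂₃.add_right _)⟩

end

theorem IsMinimizedSplitting.exists_residue_class_and_parity {F : Type*} [Field F] [Finite F]
    (hF : ringChar F ≠ 2) {w : Fin 2 → Fin 2 → F[X]} (hw : IsMinimizedSplitting w) {D : F[X]}
    (hD : D ≠ 0) (hwD : ∀ s i, w s i ∣ D) {e : ℕ}
    (hinf : ∀ s, IsSolvableAtInfty (w s 0).leadingCoeff (w s 1).leadingCoeff
      ((w s 0).natDegree + e) ((w s 1).natDegree + e)) :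
    ∃ (ε : ℕ) (b : F[X]) (g : Fin 2 → F[X]), ε ≤ 1 ∧ IsCoprime b D ∧
      (∀ s, IsMonicGcd (w s 0) (w s 1) (g s)) ∧
      ∀ p : F[X], p.Monic → Irreducible p → D ∣ p - b → p.natDegree % 2 = ε →
        ∀ s, ∃ x y : RatFunc F, algebraMap F[X] (RatFunc F) (w s 0) * x ^ 2 +
          algebraMap F[X] (RatFunc F) (w s 1) * y ^ 2 =
            algebraMap F[X] (RatFunc F) (g s * g (s + 1) * p) := by
  have hw0 (s i : Fin 2) : w s i ≠ 0 := (hw.squarefree s i).ne_zero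
  choose g A hg hwA hA using fun s => exists_isMonicGcd (hw0 s)
  obtain ⟨b, hb, hsq⟩ := hw.exists_residue_class hwA hA hD hwD
  refine ⟨(e + (g 0).natDegree + (g 1).natDegree) % 2, b, g, by omega, hb, hg,
    fun p hp hpi hpb hdeg s => ?_⟩
  have hpD : IsCoprime p D := by
    obtain ⟨k, hk⟩ := hpb
    rw [sub_eq_iff_eq_add'.mp hk]
    exact hb.add_mul_left_left k
  have hparity (i : Fin 2) : (w s i).natDegree + e ≡
      (A s i).natDegree + (g (s + 1) * p).natDegree [MOD 2] := by
    have hgs : (g s).natDegree + (g (s + 1)).natDegree = (g 0).natDegree + (g 1).natDegree := by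
      fin_cases s
      exacts [rfl, add_comm _ _]
    rw [hwA, (hg s).1.natDegree_mul' (right_ne_zero_of_mul (hwA s i ▸ hw0 s i)),
      (hg (s + 1)).1.natDegree_mul hp]
    unfold Nat.ModEq
    omega
  exact hw.exists_mul_sq_add_mul_sq_eq hF hwA hA (fun s => (hg s).1) s hp hpi
    (fun s i => hpD.of_isCoprime_of_dvd_right (hwD s i)) (hsq p hpb s)
    ((hinf s).congr (leadingCoeff_ne_zero.mpr (hw0 s 0)) (leadingCoeff_ne_zero.mpr (hw0 s 1))
      (hparity 0) (hparity 1))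

theorem splitting_quaternary_general
    {F : Type*} [Field F] [Finite F] (hodd : ringChar F ≠ 2)
    (a : Fin 4 → F[X]) (hmin : IsMinimized a)
    (hiso : ∃ x : Fin 4 → RatFunc F, x ≠ 0 ∧
      ∑ m, algebraMap F[X] (RatFunc F) (a m) * x m ^ 2 = 0) :
    ∃ (σ : Equiv.Perm (Fin 4)) (ε : ℕ) (b P₁ P₂ : F[X]),
      ε ≤ 1 ∧
      IsCoprime b (a 0 * a 1 * a 2 * a 3) ∧
      IsMonicGcd (a (σ 0)) (a (σ 1)) P₁ ∧
      IsMonicGcd (a (σ 2)) (a (σ 3)) P₂ ∧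
      ∀ p : F[X], p.Monic → Irreducible p →
        (a 0 * a 1 * a 2 * a 3) ∣ (p - b) → p.natDegree % 2 = ε →
        (∃ x y : RatFunc F,
          algebraMap F[X] (RatFunc F) (a (σ 0)) * x ^ 2 +
            algebraMap F[X] (RatFunc F) (a (σ 1)) * y ^ 2 =
          algebraMap F[X] (RatFunc F) (P₁ * P₂ * p)) ∧
        (∃ z w : RatFunc F,
          -(algebraMap F[X] (RatFunc F) (a (σ 2)) * z ^ 2) -
            algebraMap F[X] (RatFunc F) (a (σ 3)) * w ^ 2 =
          algebraMap F[X] (RatFunc F) (P₁ * P₂ * p)) := by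
  obtain ⟨x, hx, hax⟩ := hiso
  obtain ⟨σ, e, hinf₀, hinf₁⟩ := exists_perm_isSolvableAtInfty hmin.1 hmin.2.2.2.2 hx hax
  have haD (m : Fin 4) : a m ∣ a 0 * a 1 * a 2 * a 3 :=
    Fin.prod_univ_four a ▸ Finset.dvd_prod_of_mem a (Finset.mem_univ m)
  have hD : a 0 * a 1 * a 2 * a 3 ≠ 0 :=
    Fin.prod_univ_four a ▸ Finset.prod_ne_zero_iff.mpr fun m _ => hmin.1 m
  obtain ⟨ε, b, g, hε, hb, hg, hsol⟩ :=
    (hmin.comp_perm σ).isMinimizedSplitting.exists_residue_class_and_parity hodd hD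
      (Fin.forall_fin_two.mpr ⟨Fin.forall_fin_two.mpr ⟨haD _, haD _⟩,
        Fin.forall_fin_two.mpr ⟨neg_dvd.mpr (haD _), neg_dvd.mpr (haD _)⟩⟩)
      (Fin.forall_fin_two.mpr ⟨hinf₀, hinf₁⟩)
  refine ⟨σ, ε, b, g 0, g 1, hε, hb, hg 0, (hg 1).of_neg, fun p hp hpi hpb hdeg =>
    ⟨hsol p hp hpi hpb hdeg 0, ?_⟩⟩
  obtain ⟨z, w, hzw⟩ := hsol p hp hpi hpb hdeg 1
  refine ⟨z, w, ?_⟩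
  rw [mul_comm (g 0)]
  simpa [← sub_eq_add_neg] using hzw

/-- splitting an isotropic minimized quaternary form whose binary
subforms are all anisotropic: there are a permutation `σ`, a parity `ε` and a residue
class `b` modulo `D = a₁a₂a₃a₄` such that for every monic irreducible `a ≡ b (mod D)` of
degree `≡ ε (mod 2)`, both `a_{σ(1)}x² + a_{σ(2)}y² = P·a` and
`−a_{σ(3)}z² − a_{σ(4)}w² = P·a` are solvable over `𝔽_q(t)`, where `P` is the product of
the monic gcd of `a_{σ(1)}, a_{σ(2)}` with the monic gcd of `a_{σ(3)}, a_{σ(4)}`. -/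
theorem splitting_quaternary
    {F : Type*} [Field F] [Fintype F] (hodd : ringChar F ≠ 2)
    (a : Fin 4 → F[X]) (hmin : IsMinimized a)
    (hiso : ∃ x : Fin 4 → RatFunc F, x ≠ 0 ∧
      ∑ m, algebraMap F[X] (RatFunc F) (a m) * x m ^ 2 = 0)
    (hbin : ∀ i j : Fin 4, i ≠ j → ∀ x y : RatFunc F,
      algebraMap F[X] (RatFunc F) (a i) * x ^ 2 +
        algebraMap F[X] (RatFunc F) (a j) * y ^ 2 = 0 → x = 0 ∧ y = 0) :
    ∃ (σ : Equiv.Perm (Fin 4)) (ε : ℕ) (b P₁ P₂ : F[X]),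
      ε ≤ 1 ∧
      IsCoprime b (a 0 * a 1 * a 2 * a 3) ∧
      IsMonicGcd (a (σ 0)) (a (σ 1)) P₁ ∧
      IsMonicGcd (a (σ 2)) (a (σ 3)) P₂ ∧
      ∀ p : F[X], p.Monic → Irreducible p →
        (a 0 * a 1 * a 2 * a 3) ∣ (p - b) → p.natDegree % 2 = ε →
        (∃ x y : RatFunc F,
          algebraMap F[X] (RatFunc F) (a (σ 0)) * x ^ 2 +
            algebraMap F[X] (RatFunc F) (a (σ 1)) * y ^ 2 =
          algebraMap F[X] (RatFunc F) (P₁ * P₂ * p)) ∧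
        (∃ z w : RatFunc F,
          -(algebraMap F[X] (RatFunc F) (a (σ 2)) * z ^ 2) -
            algebraMap F[X] (RatFunc F) (a (σ 3)) * w ^ 2 =
          algebraMap F[X] (RatFunc F) (P₁ * P₂ * p)) :=
  splitting_quaternary_general hodd a hmin hiso
end
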